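/- arXiv:2310.01757 — 8 statements merged into one kernel-verified Lean document; each statement's English description precedes it below -/
import Mathlib

section
/- Let ℓ ≥ 2 and let α₁, …, α_ℓ ∈ ℝ and β₂, …, β_ℓ ∈ ℝ with β_j > 0 for 2 ≤ j ≤ ℓ. Then the ℓ×(ℓ−1) matrix product T_ℓ · T_{ℓ,ℓ−1} has rank exactly ℓ−1, even when the symmetric tridiagonal matrix T_ℓ is singular. -/
/-- The (m+1)×m tridiagonal matrix `T_{m+1,m}` produced by the symmetric Lanczos process,
with (1-based) diagonal entries `α 1, …, α m`, subdiagonal entries `β 2, …, β (m+1)` and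
superdiagonal entries `β 2, …, β m`. -/
def lanczosRect (m : ℕ) (α β : ℕ → ℝ) : Matrix (Fin (m + 1)) (Fin m) ℝ :=
  Matrix.of fun i j =>
    if (i : ℕ) = (j : ℕ) then α ((j : ℕ) + 1)
    else if (i : ℕ) = (j : ℕ) + 1 then β ((j : ℕ) + 2)
    else if (j : ℕ) = (i : ℕ) + 1 then β ((i : ℕ) + 2)
    else 0

/-- The square symmetric tridiagonal Lanczos matrix `T_m`, the top m×m block of `T_{m+1,m}`,
with (1-based) diagonal entries `α 1, …, α m` and off-diagonal entries `β 2, …, β m`. -/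
def lanczosSq (m : ℕ) (α β : ℕ → ℝ) : Matrix (Fin m) (Fin m) ℝ :=
  Matrix.of fun i j =>
    if (i : ℕ) = (j : ℕ) then α ((j : ℕ) + 1)
    else if (i : ℕ) = (j : ℕ) + 1 then β ((j : ℕ) + 2)
    else if (j : ℕ) = (i : ℕ) + 1 then β ((i : ℕ) + 2)
    else 0

/-!
The first `m` rows of `T_{m+1}` form the transpose of `R = T_{m+1,m}`, so the first `m` rows of
`T_{m+1} * R` form the Gram matrix `Rᵀ * R`. Hence `rank R = rank (Rᵀ * R) ≤ rank (T_{m+1} * R) ≤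
rank R`, whether or not `T_{m+1}` is invertible. Finally `R` has full column rank, because deleting
its first row leaves an upper triangular matrix with diagonal `β 2, …, β (m + 1)`.
-/

section Rank

open Matrix

variable {l m n R : Type*} [Fintype n]

theorem rank_mul_eq_right_of_submatrix_eq_conjTranspose [Fintype m] [Field R] [PartialOrder R]
    [StarRing R] [StarOrderedRing R] {A : Matrix l m R} {B : Matrix m n R} (r : n → l)
    (hA : A.submatrix r id = Bᴴ) : (A * B).rank = B.rank := by
  refine (rank_mul_le_right A B).antisymm ?_
  calc
    B.rank = (Bᴴ * B).rank := (rank_conjTranspose_mul_self B).symm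
    _ = ((A * B).submatrix r id).rank := by
      rw [submatrix_mul A B r id id Function.bijective_id, hA, submatrix_id_id]
    _ ≤ (A * B).rank := rank_submatrix_le _ r id

theorem rank_eq_card_of_isUpperTriangular_submatrix [LinearOrder n] [CommRing R] [IsDomain R]
    {A : Matrix m n R} (r : n → m) (htri : (A.submatrix r id).IsUpperTriangular)
    (hdiag : ∀ j, A (r j) j ≠ 0) : A.rank = Fintype.card n := by
  have hdet : (A.submatrix r id).det ≠ 0 := by
    rw [det_of_isUpperTriangular htri]
    exact Finset.prod_ne_zero_iff.mpr fun j _ => hdiag j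
  refine A.rank_le_card_width.antisymm ?_
  rw [← rank_of_det_ne_zero hdet]
  exact rank_submatrix_le A r id

end Rank

section Lanczos

variable (m : ℕ) (α β : ℕ → ℝ)

theorem lanczosSq_submatrix_castSucc :
    (lanczosSq (m + 1) α β).submatrix Fin.castSucc id = (lanczosRect m α β).transpose := by
  ext i j
  simp only [lanczosSq, lanczosRect, Matrix.submatrix_apply, Matrix.transpose_apply,
    Matrix.of_apply, Fin.val_castSucc, id_eq]
  grind

theorem lanczosRect_succ_self (j : Fin m) : lanczosRect m α β j.succ j = β (j + 2) := by
  simp [lanczosRect]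

theorem isUpperTriangular_lanczosRect_submatrix_succ :
    ((lanczosRect m α β).submatrix Fin.succ id).IsUpperTriangular := by
  intro i j (hji : j < i)
  simp only [lanczosRect, Matrix.submatrix_apply, Matrix.of_apply, Fin.val_succ, id_eq]
  grind

theorem rank_lanczosSq_mul_lanczosRect :
    (lanczosSq (m + 1) α β * lanczosRect m α β).rank = (lanczosRect m α β).rank :=
  rank_mul_eq_right_of_submatrix_eq_conjTranspose Fin.castSucc <| by
    rw [lanczosSq_submatrix_castSucc, Matrix.conjTranspose_eq_transpose_of_trivial]

variable {m β}

theorem rank_lanczosRect (hβ : ∀ j, 2 ≤ j → j ≤ m + 1 → β j ≠ 0) :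
    (lanczosRect m α β).rank = m := by
  have hdiag (j : Fin m) : lanczosRect m α β j.succ j ≠ 0 := by
    rw [lanczosRect_succ_self]
    exact hβ _ (by lia) (by lia)
  simpa using rank_eq_card_of_isUpperTriangular_submatrix Fin.succ
    (isUpperTriangular_lanczosRect_submatrix_succ m α β) hdiag

theorem lanczos_TT_rank_sq_general (hβ : ∀ j, 2 ≤ j → j ≤ m + 1 → β j ≠ 0) :
    (lanczosSq (m + 1) α β * lanczosRect m α β).rank = m := by
  rw [rank_lanczosSq_mul_lanczosRect, rank_lanczosRect α hβ]

end Lanczos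

/-- Paper: Theorem 4.2.  Let `ℓ = m + 1 ≥ 2`.  If the off-diagonal Lanczos entries
`β 2, …, β ℓ` are positive, then the ℓ×(ℓ−1) product `T_ℓ ⬝ T_{ℓ,ℓ−1}` has rank
exactly `ℓ − 1 = m`, even when `T_ℓ` is singular. -/
theorem lanczos_TT_rank_sq (m : ℕ) (hm : 1 ≤ m) (α β : ℕ → ℝ)
    (hβ : ∀ j, 2 ≤ j → j ≤ m + 1 → 0 < β j) :
    (lanczosSq (m + 1) α β * lanczosRect m α β).rank = m :=
  lanczos_TT_rank_sq_general α fun j h2 hj => (hβ j h2 hj).ne'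
end

section
/- Let A be a real symmetric n×n matrix and b ∈ ℝⁿ. Then there exists a vector x in the Krylov subspace span{A^j b : 0 ≤ j < n} such that A(b − Ax) = 0, i.e., A²x = Ab. In particular, even when the system Ax = b is inconsistent, the minimum of ‖A(b − Ax)‖ over the full Krylov subspace generated by A and b equals zero. -/
/-!
Only `ker A ∩ range A = 0` matters about a symmetric matrix `A`. The Krylov subspace `W` is
`A`-invariant by Cayley–Hamilton, so `A` maps `A W` into itself, injectively and hence onto.
Thus `A b ∈ A W` equals `A (A x)` for some `x ∈ W`.
-/

section Krylov

variable {R M : Type*} [CommSemiring R] [AddCommMonoid M] [Module R M]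

/-- The Krylov subspace `span {b, f b, …, f^(n-1) b}` of an endomorphism `f` and a vector `b`.
The parameter `n` counts the generators, so it bounds the dimension. -/
def krylovSubspace (f : Module.End R M) (b : M) (n : ℕ) : Submodule R M :=
  Submodule.span R {v | ∃ j < n, v = (f ^ j) b}

theorem aeval_apply_mem_krylovSubspace (f : Module.End R M) (b : M) {n : ℕ}
    {p : Polynomial R} (hp : p.degree < n) :
    Polynomial.aeval f p b ∈ krylovSubspace f b n := by
  rw [Polynomial.aeval_def, Polynomial.eval₂_eq_sum, Polynomial.sum_def, LinearMap.sum_apply]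
  refine Submodule.sum_mem _ fun j hj ↦ Submodule.smul_mem _ _ (Submodule.subset_span ⟨j, ?_, rfl⟩)
  exact_mod_cast (Polynomial.le_degree_of_mem_supp j hj).trans_lt hp

theorem krylovSubspace_toLin' {n : Type*} [Fintype n] [DecidableEq n]
    (A : Matrix n n R) (b : n → R) (m : ℕ) :
    krylovSubspace A.toLin' b m = Submodule.span R {v | ∃ j < m, v = (A ^ j).mulVec b} := by
  simp only [krylovSubspace, ← Matrix.toLin'_pow, Matrix.toLin'_apply]

end Krylov

section CayleyHamilton

variable {R M : Type*} [CommRing R] [AddCommGroup M] [Module R M] [Module.Finite R M]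
  [Module.Free R M]

theorem pow_apply_mem_krylovSubspace_finrank (f : Module.End R M) (b : M) (k : ℕ) :
    (f ^ k) b ∈ krylovSubspace f b (Module.finrank R M) := by
  nontriviality R using Module.subsingleton R M
  rw [f.pow_eq_aeval_mod_charpoly k]
  apply aeval_apply_mem_krylovSubspace
  rw [← f.charpoly_natDegree, ← Polynomial.degree_eq_natDegree f.charpoly_monic.ne_zero]
  exact Polynomial.degree_modByMonic_lt _ f.charpoly_monic

theorem self_mem_krylovSubspace_finrank (f : Module.End R M) (b : M) :
    b ∈ krylovSubspace f b (Module.finrank R M) :=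
  pow_apply_mem_krylovSubspace_finrank f b 0

theorem map_krylovSubspace_finrank_le (f : Module.End R M) (b : M) :
    (krylovSubspace f b (Module.finrank R M)).map f ≤
      krylovSubspace f b (Module.finrank R M) := by
  rw [Submodule.map_le_iff_le_comap, krylovSubspace, Submodule.span_le]
  rintro _ ⟨j, -, rfl⟩
  rw [SetLike.mem_coe, Submodule.mem_comap, ← Module.End.mul_apply, ← pow_succ']
  exact pow_apply_mem_krylovSubspace_finrank f b (j + 1)

end CayleyHamilton

theorem exists_mem_apply_sub_apply_eq_zero {K V : Type*} [DivisionRing K] [AddCommGroup V]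
    [Module K V] {f : Module.End K V} (hf : Disjoint f.range f.ker) {W : Submodule K V}
    [FiniteDimensional K W] (hW : W.map f ≤ W) {b : V} (hb : b ∈ W) :
    ∃ x ∈ W, f (b - f x) = 0 := by
  have comap_eq : (W.map f).comap f = W.map f ⊔ f.ker :=
    LinearMap.comap_eq_sup_ker_of_disjoint
      (fun v hv ↦ Submodule.mem_map_of_mem (hW hv)) (hf.mono_left LinearMap.map_le_range)
  have b_mem : b ∈ W.map f ⊔ f.ker := comap_eq ▸ Submodule.mem_map_of_mem hb
  obtain ⟨_, ⟨x, hx, rfl⟩, z, hz, rfl⟩ := Submodule.mem_sup.mp b_mem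
  exact ⟨x, hx, by rwa [add_sub_cancel_left]⟩

theorem krylov_Ar_eq_zero_general {K V : Type*} [Field K] [AddCommGroup V] [Module K V]
    [FiniteDimensional K V] {f : Module.End K V} (hf : Disjoint f.range f.ker) (b : V) :
    ∃ x ∈ krylovSubspace f b (Module.finrank K V), f (b - f x) = 0 :=
  exists_mem_apply_sub_apply_eq_zero hf (map_krylovSubspace_finrank_le f b)
    (self_mem_krylovSubspace_finrank f b)

theorem disjoint_range_ker_toLin'_of_isHermitian {R n : Type*} [CommRing R] [PartialOrder R]
    [StarRing R] [StarOrderedRing R] [NoZeroDivisors R] [Fintype n] [DecidableEq n]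
    {A : Matrix n n R} (hA : A.IsHermitian) :
    Disjoint A.toLin'.range A.toLin'.ker := by
  rw [Submodule.disjoint_def]
  rintro _ ⟨v, rfl⟩ hv
  rw [LinearMap.mem_ker, Matrix.toLin'_apply, Matrix.toLin'_apply, Matrix.mulVec_mulVec] at hv
  rw [Matrix.toLin'_apply, ← Matrix.conjTranspose_mul_self_mulVec_eq_zero, hA.eq, hv]

/-- Paper: Theorem 4.5.  For a real symmetric `A` and any `b` (so `A x = b` may be
inconsistent), there is a vector `x` in the full Krylov subspace
`span {b, Ab, …, A^(n−1) b}` with `A (b − A x) = 0`, i.e. `A² x = A b`; in particular the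
minimum of `‖A (b − A x)‖` over the Krylov subspace is zero. -/
theorem krylov_Ar_eq_zero (n : ℕ) (A : Matrix (Fin n) (Fin n) ℝ) (hA : A.IsSymm)
    (b : Fin n → ℝ) :
    ∃ x ∈ Submodule.span ℝ {v : Fin n → ℝ | ∃ j < n, v = (A ^ j).mulVec b},
      A.mulVec (b - A.mulVec x) = 0 := by
  have hdisj := disjoint_range_ker_toLin'_of_isHermitian (Matrix.isHermitian_iff_isSymm.mpr hA)
  simpa [krylovSubspace_toLin'] using krylov_Ar_eq_zero_general hdisj b
end

section
/- For all k < N, the conjugation coefficient satisfies β_k = ρ_{k+1}/ρ_k, i.e., −(p_kᵀAˢr_{k+1})·ρ_k = ρ_{k+1}·(p_kᵀAˢp_k). -/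
open Matrix

/-!
Write `B` for the form of `A ^ (s - 1)` and `H` for that of `A ^ s`, so that `H u v = B u (A v)`.
Taking the `B`-product of `r (k + 1) = r k - α k • A (p k)` with `p k`, `r k` and `r (k + 1)` gives
in turn

* `B (r (k + 1)) (p k) = 0`, whence `B (r (k + 1)) (p (k + 1)) = ρ (k + 1)`;
* `B (r k) (r (k + 1)) = 0`, because `H (r k) (p k) = H (p k) (p k)` by conjugacy of `p (k - 1)`
  and `p k`;
* `ρ (k + 1) = -α k * H (p k) (r (k + 1))`, which is the `β`-formula multiplied by `α k`.
-/

section ConjugateDirections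

variable {K V : Type*} [Field K] [AddCommGroup V] [Module K V]

/-- The residuals `r`, directions `p` and coefficients `ρ`, `α`, `β` of a conjugate-direction
iteration for the operator `T`. The form `B` measures residuals and `H` measures curvature; for the
matrix iteration they are the forms of `A ^ (s - 1)` and `A ^ s`, and `T` is multiplication by `A`.
The relation `H u v = B u (T v)` is not part of the structure, and the iterates `x` are left out
because the other recurrences do not involve them. -/
structure IsConjugateDirectionIteration (B H : LinearMap.BilinForm K V) (T : V →ₗ[K] V)
    (r p : ℕ → V) (ρ α β : ℕ → K) : Prop where
  direction_zero : p 0 = r 0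
  rho_eq : ∀ k, ρ k = B (r k) (r k)
  alpha_eq : ∀ k, α k = ρ k / H (p k) (p k)
  residual_succ : ∀ k, r (k + 1) = r k - α k • T (p k)
  beta_eq : ∀ k, β k = -H (p k) (r (k + 1)) / H (p k) (p k)
  direction_succ : ∀ k, p (k + 1) = r (k + 1) + β k • p k

namespace IsConjugateDirectionIteration

variable {B H : LinearMap.BilinForm K V} {T : V →ₗ[K] V} {r p : ℕ → V} {ρ α β : ℕ → K}

theorem form_residual_succ (h : IsConjugateDirectionIteration B H T r p ρ α β)
    (hBH : ∀ u v, H u v = B u (T v)) (u : V) (k : ℕ) :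
    B u (r (k + 1)) = B u (r k) - α k * H u (p k) := by
  rw [h.residual_succ, map_sub, map_smul, smul_eq_mul, hBH]

theorem alpha_mul_curvature (h : IsConjugateDirectionIteration B H T r p ρ α β)
    (hH : H.toQuadraticMap.Anisotropic) {k : ℕ} (hrp : B (r k) (p k) = ρ k) :
    α k * H (p k) (p k) = ρ k := by
  -- Vanishing curvature makes `α k = ρ k / 0 = 0`, which is harmless because then `p k = 0`.
  have rho_eq_zero (hpp : H (p k) (p k) = 0) : ρ k = 0 := by
    rw [← hrp, hH (p k) hpp, map_zero]
  rw [h.alpha_eq, div_mul_cancel_of_imp rho_eq_zero]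

theorem residual_succ_orthogonal_direction (h : IsConjugateDirectionIteration B H T r p ρ α β)
    (hB : B.IsSymm) (hBH : ∀ u v, H u v = B u (T v)) (hH : H.toQuadraticMap.Anisotropic)
    {k : ℕ} (hrp : B (r k) (p k) = ρ k) : B (r (k + 1)) (p k) = 0 := by
  rw [hB.eq, h.form_residual_succ hBH, hB.eq, hrp, h.alpha_mul_curvature hH hrp, sub_self]

theorem form_residual_direction_eq_rho (h : IsConjugateDirectionIteration B H T r p ρ α β)
    (hB : B.IsSymm) (hBH : ∀ u v, H u v = B u (T v)) (hH : H.toQuadraticMap.Anisotropic) (k : ℕ) :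
    B (r k) (p k) = ρ k := by
  induction k with
  | zero => rw [h.direction_zero, h.rho_eq]
  | succ k ih =>
    rw [h.direction_succ, map_add, map_smul, h.residual_succ_orthogonal_direction hB hBH hH ih,
      smul_zero, add_zero, h.rho_eq]

theorem directions_conjugate (h : IsConjugateDirectionIteration B H T r p ρ α β)
    (hH : H.toQuadraticMap.Anisotropic) (k : ℕ) : H (p k) (p (k + 1)) = 0 := by
  have numerator_eq_zero (hpp : H (p k) (p k) = 0) : -H (p k) (r (k + 1)) = 0 := by
    rw [hH (p k) hpp, map_zero, LinearMap.zero_apply, neg_zero]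
  rw [h.direction_succ, map_add, map_smul, smul_eq_mul, h.beta_eq,
    div_mul_cancel_of_imp numerator_eq_zero, add_neg_cancel]

theorem hessian_residual_direction_eq_curvature (h : IsConjugateDirectionIteration B H T r p ρ α β)
    (hH : H.toQuadraticMap.Anisotropic) (k : ℕ) : H (r k) (p k) = H (p k) (p k) := by
  cases k with
  | zero => rw [h.direction_zero]
  | succ k =>
    have residual_eq : r (k + 1) = p (k + 1) - β k • p k := by
      rw [h.direction_succ, add_sub_cancel_right]
    rw [residual_eq, map_sub, map_smul, LinearMap.sub_apply, LinearMap.smul_apply,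
      h.directions_conjugate hH, smul_zero, sub_zero]

theorem residuals_orthogonal (h : IsConjugateDirectionIteration B H T r p ρ α β)
    (hB : B.IsSymm) (hBH : ∀ u v, H u v = B u (T v)) (hH : H.toQuadraticMap.Anisotropic) (k : ℕ) :
    B (r k) (r (k + 1)) = 0 := by
  rw [h.form_residual_succ hBH, h.hessian_residual_direction_eq_curvature hH,
    h.alpha_mul_curvature hH (h.form_residual_direction_eq_rho hB hBH hH k), h.rho_eq, sub_self]

theorem rho_succ (h : IsConjugateDirectionIteration B H T r p ρ α β)
    (hB : B.IsSymm) (hHsymm : H.IsSymm) (hBH : ∀ u v, H u v = B u (T v))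
    (hH : H.toQuadraticMap.Anisotropic) (k : ℕ) :
    ρ (k + 1) = -(α k * H (p k) (r (k + 1))) := by
  rw [h.rho_eq, h.form_residual_succ hBH, hB.eq, h.residuals_orthogonal hB hBH hH, zero_sub,
    hHsymm.eq]

end IsConjugateDirectionIteration

theorem conjdir_beta_formula_general {B H : LinearMap.BilinForm K V} {T : V →ₗ[K] V}
    {r p : ℕ → V} {ρ α β : ℕ → K} (h : IsConjugateDirectionIteration B H T r p ρ α β)
    (hB : B.IsSymm) (hHsymm : H.IsSymm) (hBH : ∀ u v, H u v = B u (T v))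
    (hH : H.toQuadraticMap.Anisotropic) {k : ℕ} (hρk : ρ k ≠ 0) :
    β k = ρ (k + 1) / ρ k ∧
      -H (p k) (r (k + 1)) * ρ k = ρ (k + 1) * H (p k) (p k) := by
  have alpha_mul : α k * H (p k) (p k) = ρ k :=
    h.alpha_mul_curvature hH (h.form_residual_direction_eq_rho hB hBH hH k)
  have curvature_ne_zero : H (p k) (p k) ≠ 0 := right_ne_zero_of_mul (alpha_mul ▸ hρk)
  have cross_mul : -H (p k) (r (k + 1)) * ρ k = ρ (k + 1) * H (p k) (p k) := by
    rw [h.rho_succ hB hHsymm hBH hH, ← alpha_mul]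
    ring
  exact ⟨by rw [h.beta_eq, div_eq_div_iff curvature_ne_zero hρk, cross_mul], cross_mul⟩

end ConjugateDirections

section MatrixForms

variable {ι : Type*} [Fintype ι] [DecidableEq ι]

open scoped ComplexOrder in
theorem posDef_pow {𝕜 : Type*} [RCLike 𝕜] {A : Matrix ι ι 𝕜} (hA : A.PosDef) (m : ℕ) :
    (A ^ m).PosDef :=
  (hA.posSemidef.pow m).posDef_iff_isUnit.2 (hA.isUnit.pow m)

theorem isSymm_toBilin'_of_posDef {R : Type*} [CommRing R] [PartialOrder R] [StarRing R]
    [TrivialStar R] {M : Matrix ι ι R} (hM : M.PosDef) : M.toBilin'.IsSymm :=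
  isSymm_toBilin'_iff_isSymm.2 (isHermitian_iff_isSymm.1 hM.isHermitian)

theorem toBilin'_pow_apply {R : Type*} [CommSemiring R] (A : Matrix ι ι R) {s : ℕ} (hs : 1 ≤ s)
    (u v : ι → R) : (A ^ s).toBilin' u v = (A ^ (s - 1)).toBilin' u (A.mulVecLin v) := by
  rw [toBilin'_apply', toBilin'_apply', mulVecLin_apply, mulVec_mulVec, pow_sub_one_mul (by omega)]

end MatrixForms

/-- Paper: Theorem 6.1 (β-formula).  Conjugate-direction iteration with Hessian `H = Aˢ`
and gradient `∇f(x) = −A^(s−1) (b − A x)` (s = 1, 2, 4 give CG, CR, cAr): for all `k < N`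
the conjugation coefficient satisfies `β_k = ρ_{k+1} / ρ_k`, i.e.
`−(p_kᵀ Aˢ r_{k+1}) ρ_k = ρ_{k+1} (p_kᵀ Aˢ p_k)`. -/
theorem conjdir_beta_formula (n s N : ℕ) (hs : 1 ≤ s)
    (A : Matrix (Fin n) (Fin n) ℝ) (hA : A.PosDef) (b : Fin n → ℝ)
    (x r p : ℕ → (Fin n → ℝ)) (ρ α β : ℕ → ℝ)
    (hx0 : x 0 = 0) (hr0 : r 0 = b) (hp0 : p 0 = b)
    (hρ : ∀ k, ρ k = r k ⬝ᵥ (A ^ (s - 1)).mulVec (r k))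
    (hα : ∀ k, α k = ρ k / (p k ⬝ᵥ (A ^ s).mulVec (p k)))
    (hx : ∀ k, x (k + 1) = x k + α k • p k)
    (hr : ∀ k, r (k + 1) = r k - α k • A.mulVec (p k))
    (hβ : ∀ k, β k = -(p k ⬝ᵥ (A ^ s).mulVec (r (k + 1))) / (p k ⬝ᵥ (A ^ s).mulVec (p k)))
    (hp : ∀ k, p (k + 1) = r (k + 1) + β k • p k)
    (hne : ∀ k ≤ N, r k ≠ 0) :
    ∀ k < N,
      β k = ρ (k + 1) / ρ k ∧
      -(p k ⬝ᵥ (A ^ s).mulVec (r (k + 1))) * ρ k = ρ (k + 1) * (p k ⬝ᵥ (A ^ s).mulVec (p k)) := by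
  intro k hk
  have residual_form_ne_zero : ρ k ≠ 0 :=
    hρ k ▸ ((posDef_pow hA (s - 1)).dotProduct_mulVec_pos (hne k hk.le)).ne'
  simp only [← toBilin'_apply'] at hρ hα hβ ⊢
  exact conjdir_beta_formula_general (T := A.mulVecLin)
    ⟨hp0.trans hr0.symm, hρ, hα, hr, hβ, hp⟩
    (isSymm_toBilin'_of_posDef (posDef_pow hA (s - 1)))
    (isSymm_toBilin'_of_posDef (posDef_pow hA s)) (toBilin'_pow_apply A hs)
    (posDef_pow hA s).toQuadraticForm'.anisotropic residual_form_ne_zero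
end

section
/- For all i, j ≤ ℓ with i > j, the cAr iterates satisfy r_iᵀA³p_j = 0 (a later residual is A³-orthogonal to every earlier direction). -/
open Matrix

/-!
Conjugate gradients for an operator `T` that is self-adjoint for a bilinear form `B` make the
residuals `B`-orthogonal to all earlier directions and the directions `T`-conjugate, by a
simultaneous induction. The cAr iteration is this method for `T = A` and
`B u v = uᵀ A³ v`: the form satisfies `B p (A p) = ‖A² p‖²`, the denominator of `α`.
-/

/-- The conjugate gradient recurrence for the operator `T`, with residuals `r`, search directions
`p`, step sizes `α` and update coefficients `β`, where `B` takes the place of the inner product.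
The iterates `x` are left out, since the residuals and directions do not depend on them. -/
structure IsConjGradIteration {K E : Type*} [Field K] [AddCommGroup E] [Module K E]
    (B : LinearMap.BilinForm K E) (T : Module.End K E) (r p : ℕ → E) (ρ α β : ℕ → K) : Prop where
  direction_zero : p 0 = r 0
  rho_eq : ∀ k, ρ k = B (r k) (r k)
  alpha_eq : ∀ k, α k = ρ k / B (p k) (T (p k))
  residual_succ : ∀ k, r (k + 1) = r k - α k • T (p k)
  beta_eq : ∀ k, β k = ρ (k + 1) / ρ k
  direction_succ : ∀ k, p (k + 1) = r (k + 1) + β k • p k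

namespace IsConjGradIteration

variable {K E : Type*} [Field K] [AddCommGroup E] [Module K E]
  {B : LinearMap.BilinForm K E} {T : Module.End K E} {r p : ℕ → E} {ρ α β : ℕ → K}

theorem form_residual_eq_zero_of_form_direction_eq_zero
    (h : IsConjGradIteration B T r p ρ α β) {v : E} {m : ℕ}
    (hv : ∀ j < m, B v (p j) = 0) {j : ℕ} (hj : j < m) : B v (r j) = 0 := by
  cases j with
  | zero => rw [← h.direction_zero, hv 0 hj]
  | succ j =>
    have hr : r (j + 1) = p (j + 1) - β j • p j := eq_sub_of_add_eq (h.direction_succ j).symm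
    rw [hr, map_sub, map_smul, hv _ hj, hv j (by lia), smul_zero, sub_zero]

theorem form_residual_direction_self (h : IsConjGradIteration B T r p ρ α β) {m : ℕ}
    (hrp : ∀ j < m, B (r m) (p j) = 0) : B (r m) (p m) = ρ m := by
  cases m with
  | zero => rw [h.direction_zero, h.rho_eq]
  | succ m =>
    rw [h.direction_succ, map_add, map_smul, hrp m m.lt_succ_self, smul_zero, add_zero, h.rho_eq]

theorem alpha_mul_form_map_direction (h : IsConjGradIteration B T r p ρ α β) (v : E) (j : ℕ) :
    α j * B v (T (p j)) = B v (r j) - B v (r (j + 1)) := by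
  rw [h.residual_succ, map_sub, map_smul, smul_eq_mul, sub_sub_cancel]

theorem alpha_mul_form_direction_map_direction_self (h : IsConjGradIteration B T r p ρ α β)
    {k : ℕ} (hα : α k ≠ 0) : α k * B (p k) (T (p k)) = ρ k := by
  rw [h.alpha_eq] at hα ⊢
  exact div_mul_cancel₀ _ (div_ne_zero_iff.mp hα).2

theorem rho_ne_zero_of_alpha_ne_zero (h : IsConjGradIteration B T r p ρ α β) {k : ℕ}
    (hα : α k ≠ 0) : ρ k ≠ 0 := by
  rw [h.alpha_eq] at hα
  exact (div_ne_zero_iff.mp hα).1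

theorem form_residual_succ_direction_eq_zero (h : IsConjGradIteration B T r p ρ α β)
    (hT : B.IsSelfAdjoint T) {m : ℕ} (hα : α m ≠ 0)
    (hrp : ∀ j < m, B (r m) (p j) = 0) (hpp : ∀ j < m, B (p m) (T (p j)) = 0) :
    ∀ j < m + 1, B (r (m + 1)) (p j) = 0 := by
  intro j hj
  have hexpand : B (r (m + 1)) (p j) = B (r m) (p j) - α m * B (p m) (T (p j)) := by
    rw [h.residual_succ, map_sub, map_smul, LinearMap.sub_apply, LinearMap.smul_apply,
      smul_eq_mul, hT]
  rcases Nat.lt_succ_iff_lt_or_eq.mp hj with hlt | rfl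
  · rw [hexpand, hrp j hlt, hpp j hlt, mul_zero, sub_zero]
  · rw [hexpand, h.form_residual_direction_self hrp,
      h.alpha_mul_form_direction_map_direction_self hα, sub_self]

theorem form_direction_succ_map_direction_eq_zero (h : IsConjGradIteration B T r p ρ α β) {m : ℕ}
    (hα : ∀ j < m + 1, α j ≠ 0) (hrp : ∀ j < m + 1, B (r (m + 1)) (p j) = 0)
    (hpp : ∀ j < m, B (p m) (T (p j)) = 0) :
    ∀ j < m + 1, B (p (m + 1)) (T (p j)) = 0 := by
  intro j hj
  have hrr : ∀ i < m + 1, B (r (m + 1)) (r i) = 0 := fun i hi =>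
    h.form_residual_eq_zero_of_form_direction_eq_zero hrp hi
  have hexpand : α j * B (p (m + 1)) (T (p j)) =
      -B (r (m + 1)) (r (j + 1)) + β m * (α j * B (p m) (T (p j))) := by
    rw [h.direction_succ, map_add, map_smul, LinearMap.add_apply, LinearMap.smul_apply,
      smul_eq_mul, mul_add, h.alpha_mul_form_map_direction, hrr j hj]
    ring
  refine (mul_eq_zero.mp ?_).resolve_left (hα j hj)
  rcases Nat.lt_succ_iff_lt_or_eq.mp hj with hlt | rfl
  · rw [hexpand, hpp j hlt, hrr (j + 1) (by lia), mul_zero, mul_zero, neg_zero, add_zero]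
  · rw [hexpand, h.alpha_mul_form_direction_map_direction_self (hα j hj), ← h.rho_eq, h.beta_eq,
      div_mul_cancel₀ _ (h.rho_ne_zero_of_alpha_ne_zero (hα j hj)), neg_add_cancel]

-- Since `x / 0 = 0`, `α j ≠ 0` says that none of the divisions in step `j` breaks down.
theorem orth_and_conj_of_alpha_ne_zero
    (h : IsConjGradIteration B T r p ρ α β) (hT : B.IsSelfAdjoint T) {m : ℕ}
    (hα : ∀ j < m, α j ≠ 0) :
    (∀ j < m, B (r m) (p j) = 0) ∧ ∀ j < m, B (p m) (T (p j)) = 0 := by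
  induction m with
  | zero => simp
  | succ m ih =>
    obtain ⟨hrp, hpp⟩ := ih fun j hj => hα j (by lia)
    have hrp' := h.form_residual_succ_direction_eq_zero hT (hα m m.lt_succ_self) hrp hpp
    exact ⟨hrp', h.form_direction_succ_map_direction_eq_zero hα hrp' hpp⟩

theorem alpha_ne_zero (h : IsConjGradIteration B T r p ρ α β) (hT : B.IsSelfAdjoint T)
    (hBT : ∀ u ≠ 0, B u (T u) ≠ 0) {m : ℕ} (hρ : ∀ k < m, ρ k ≠ 0) :
    ∀ k < m, α k ≠ 0 := by
  intro k
  induction k using Nat.strong_induction_on with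
  | _ k ih =>
    intro hk
    have hrp : ∀ j < k, B (r k) (p j) = 0 :=
      (h.orth_and_conj_of_alpha_ne_zero hT
        fun j hj => ih j hj (hj.trans hk)).1
    have hp : p k ≠ 0 := by
      intro hp
      apply hρ k hk
      rw [← h.form_residual_direction_self hrp, hp, map_zero]
    rw [h.alpha_eq]
    exact div_ne_zero (hρ k hk) (hBT _ hp)

theorem form_residual_direction_eq_zero (h : IsConjGradIteration B T r p ρ α β)
    (hT : B.IsSelfAdjoint T) (hB : ∀ u ≠ 0, B u u ≠ 0) (hBT : ∀ u ≠ 0, B u (T u) ≠ 0) {i j : ℕ}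
    (hr : ∀ k < i, r k ≠ 0) (hji : j < i) : B (r i) (p j) = 0 := by
  have hρ : ∀ k < i, ρ k ≠ 0 := fun k hk => h.rho_eq k ▸ hB _ (hr k hk)
  exact (h.orth_and_conj_of_alpha_ne_zero hT
    (h.alpha_ne_zero hT hBT hρ)).1 j hji

end IsConjGradIteration

theorem isSelfAdjoint_toLin'_dotProductBilin {R ι : Type*} [CommSemiring R] [Fintype ι]
    [DecidableEq ι] {A : Matrix ι ι R} (hA : A.IsSymm) :
    (dotProductBilin R R : LinearMap.BilinForm R (ι → R)).IsSelfAdjoint (toLin' A) := fun u v => by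
  simp only [dotProductBilin_apply_apply, toLin'_apply]
  rw [dotProduct_mulVec, ← mulVec_transpose, hA.eq]

theorem car_residual_A3_orth_directions_general {K E : Type*} [Field K] [AddCommGroup E]
    [Module K E] {D : LinearMap.BilinForm K E} {A : Module.End K E} (hA : D.IsSelfAdjoint A)
    (hD : ∀ u ≠ 0, D u u ≠ 0) (hDA : ∀ u ≠ 0, D u (A u) ≠ 0)
    {r p : ℕ → E} {ρ α β : ℕ → K} (h0 : p 0 = r 0)
    (hρ : ∀ k, ρ k = D (r k) ((A ^ 3) (r k)))
    (hα : ∀ k, α k = ρ k / D ((A ^ 2) (p k)) ((A ^ 2) (p k)))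
    (hr : ∀ k, r (k + 1) = r k - α k • A (p k))
    (hβ : ∀ k, β k = ρ (k + 1) / ρ k)
    (hp : ∀ k, p (k + 1) = r (k + 1) + β k • p k)
    {i j : ℕ} (hne : ∀ k < i, r k ≠ 0) (hji : j < i) : D (r i) ((A ^ 3) (p j)) = 0 := by
  have hA_ne : ∀ u ≠ 0, A u ≠ 0 := fun u hu hAu => hDA u hu (by rw [hAu, map_zero])
  have hcube : ∀ u, D u ((A ^ 3) u) = D (A u) (A (A u)) := fun u => (hA u (A (A u))).symm
  have hfourth : ∀ u, D u ((A ^ 3) (A u)) = D ((A ^ 2) u) ((A ^ 2) u) := fun u =>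
    ((hA (A u) ((A ^ 2) u)).trans (hA u (A ((A ^ 2) u)))).symm
  have hcg : IsConjGradIteration (D.compl₂ (A ^ 3)) A r p ρ α β :=
    ⟨h0, hρ, fun k => (hα k).trans (by rw [LinearMap.compl₂_apply, hfourth]), hr, hβ, hp⟩
  refine hcg.form_residual_direction_eq_zero (fun u v => hA u ((A ^ 3) v)) ?_ ?_ hne hji
  · intro u hu
    rw [LinearMap.compl₂_apply, hcube]
    exact hDA _ (hA_ne u hu)
  · intro u hu
    rw [LinearMap.compl₂_apply, hfourth]
    exact hD _ (hA_ne _ (hA_ne u hu))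

/-- Paper: Theorem 6.3(b).  cAr iteration for SPD `A` (with `ρ_k = r_kᵀA³r_k`,
`α_k = ρ_k/‖A²p_k‖²`, `β_k = ρ_{k+1}/ρ_k`), terminating at step `ℓ ≤ n`
(`r_k ≠ 0` for `k < ℓ` and `r_ℓ = 0`):  a later residual is `A³`-orthogonal to every earlier direction: `r_iᵀ A³ p_j = 0` for `i > j`. -/
theorem car_residual_A3_orth_directions (n ℓ : ℕ) (hℓn : ℓ ≤ n)
    (A : Matrix (Fin n) (Fin n) ℝ) (hA : A.PosDef) (b : Fin n → ℝ)
    (x r p : ℕ → (Fin n → ℝ)) (ρ α β : ℕ → ℝ)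
    (hx0 : x 0 = 0) (hr0 : r 0 = b) (hp0 : p 0 = b)
    (hρ : ∀ k, ρ k = r k ⬝ᵥ (A ^ 3).mulVec (r k))
    (hα : ∀ k, α k = ρ k / ((A ^ 2).mulVec (p k) ⬝ᵥ (A ^ 2).mulVec (p k)))
    (hx : ∀ k, x (k + 1) = x k + α k • p k)
    (hr : ∀ k, r (k + 1) = r k - α k • A.mulVec (p k))
    (hβ : ∀ k, β k = ρ (k + 1) / ρ k)
    (hp : ∀ k, p (k + 1) = r (k + 1) + β k • p k)
    (hne : ∀ k < ℓ, r k ≠ 0) (hfin : r ℓ = 0) :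
    ∀ i ≤ ℓ, ∀ j ≤ ℓ, j < i → r i ⬝ᵥ (A ^ 3).mulVec (p j) = 0 := by
  intro i hi j _ hji
  simp only [← toLin'_apply, toLin'_pow] at hρ hα hr ⊢
  exact car_residual_A3_orth_directions_general (D := dotProductBilin ℝ ℝ)
    (isSelfAdjoint_toLin'_dotProductBilin (isHermitian_iff_isSymm.mp hA.isHermitian))
    (fun _ hu => dotProduct_self_eq_zero.not.mpr hu) (fun _ hu => (hA.dotProduct_mulVec_pos hu).ne')
    (hp0.trans hr0.symm) hρ hα hr hβ hp (fun k hk => hne k (hk.trans_le hi)) hji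
end

section
/- For all i, j ≤ ℓ with i ≠ j, the cAr residuals are A³-orthogonal: r_iᵀA³r_j = 0. -/
open Matrix

/-!
In the bilinear form `B u v = uᵀA³v` the matrix `A` is self-adjoint, and
`‖A²p‖² = pᵀA⁴p = B p (A p)`. Hence cAr is the conjugate gradient iteration for the operator `A` and
the form `B`, and the usual joint induction gives `B`-orthogonal residuals and conjugate directions,
`B p_i (A p_j) = 0`. The iteration cannot break down while `ρ_k ≠ 0`: a vanishing denominator
`‖A²p_k‖²` would put `p_k` into the radical of `B`, whereas `B r_k p_k = ρ_k`. The same holds with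
`A^(2m+1)` and `A^(m+1)` in place of `A³` and `A²`; for `m = 0` this is the conjugate residual
method.
-/

/-- The conjugate gradient iteration for an operator `T` and a bilinear form `B`, with residuals
`r k`, search directions `p k`, step lengths `α k` and direction updates `β k`. It is formulated for
residuals and directions only, without the iterates. A breakdown is not excluded: a quotient whose
denominator vanishes has the value `0`. -/
structure IsConjugateGradient {K V : Type*} [Field K] [AddCommGroup V] [Module K V]
    (B : LinearMap.BilinForm K V) (T : V →ₗ[K] V) (r p : ℕ → V) (α β : ℕ → K) : Prop where
  direction_zero : p 0 = r 0
  stepLength_eq (k : ℕ) : α k = B (r k) (r k) / B (p k) (T (p k))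
  residual_succ (k : ℕ) : r (k + 1) = r k - α k • T (p k)
  update_eq (k : ℕ) : β k = B (r (k + 1)) (r (k + 1)) / B (r k) (r k)
  direction_succ (k : ℕ) : p (k + 1) = r (k + 1) + β k • p k

namespace IsConjugateGradient

variable {K V : Type*} [Field K] [AddCommGroup V] [Module K V]
  {B : LinearMap.BilinForm K V} {T : V →ₗ[K] V} {r p : ℕ → V} {α β : ℕ → K}

theorem stepLength_mul_curvature (h : IsConjugateGradient B T r p α β) {k : ℕ}
    (hcurv : B (p k) (T (p k)) ≠ 0) : α k * B (p k) (T (p k)) = B (r k) (r k) := by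
  rw [h.stepLength_eq, div_mul_cancel₀ _ hcurv]

theorem update_mul_residual (h : IsConjugateGradient B T r p α β) {k : ℕ}
    (hres : B (r k) (r k) ≠ 0) : β k * B (r k) (r k) = B (r (k + 1)) (r (k + 1)) := by
  rw [h.update_eq, div_mul_cancel₀ _ hres]

theorem residual_direction_eq (h : IsConjugateGradient B T r p α β) (hT : B.IsSelfAdjoint T)
    {k : ℕ} (hcurv : ∀ j < k, B (p j) (T (p j)) ≠ 0) : B (r k) (p k) = B (r k) (r k) := by
  induction k with
  | zero => rw [h.direction_zero]
  | succ k ih =>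
    have residual_succ_direction : B (r (k + 1)) (p k) = 0 := calc
      B (r (k + 1)) (p k) = B (r k) (p k) - α k * B (p k) (T (p k)) := by
        simp [h.residual_succ k, hT (p k) (p k)]
      _ = 0 := by
        rw [ih fun j hj => hcurv j (hj.trans k.lt_succ_self),
          h.stepLength_mul_curvature (hcurv k k.lt_succ_self), sub_self]
    simp [h.direction_succ k, residual_succ_direction]

theorem curvature_ne_zero (h : IsConjugateGradient B T r p α β) (hT : B.IsSelfAdjoint T)
    (hiso : ∀ u, B u (T u) = 0 → ∀ v, B v u = 0) {ℓ : ℕ}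
    (hres : ∀ k < ℓ, B (r k) (r k) ≠ 0) : ∀ k < ℓ, B (p k) (T (p k)) ≠ 0 := by
  intro k
  induction k using Nat.strong_induction_on with
  | h k ih =>
    intro hk hzero
    have residual_direction := h.residual_direction_eq hT fun j hj => ih j hj (hj.trans hk)
    exact hres k hk (residual_direction ▸ hiso (p k) hzero (r k))

theorem residual_map_direction_eq (h : IsConjugateGradient B T r p α β) {k : ℕ}
    (hconj : ∀ i < k, B (p i) (T (p k)) = 0) {i : ℕ} (hi : i ≤ k) :
    B (r i) (T (p k)) = B (p i) (T (p k)) := by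
  cases i with
  | zero => rw [h.direction_zero]
  | succ i => simp [h.direction_succ i, hconj i hi]

theorem residual_orthogonal_succ (h : IsConjugateGradient B T r p α β) {k : ℕ}
    (hcurv : B (p k) (T (p k)) ≠ 0) (horth : ∀ i < k, B (r i) (r k) = 0)
    (hconj : ∀ i < k, B (p i) (T (p k)) = 0) {i : ℕ} (hi : i ≤ k) :
    B (r i) (r (k + 1)) = 0 := by
  have expand : B (r i) (r (k + 1)) = B (r i) (r k) - α k * B (p i) (T (p k)) := by
    rw [← h.residual_map_direction_eq hconj hi, h.residual_succ k, map_sub, map_smul, smul_eq_mul]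
  rcases hi.lt_or_eq with hlt | rfl
  · rw [expand, horth i hlt, hconj i hlt, mul_zero, sub_zero]
  · rw [expand, h.stepLength_mul_curvature hcurv, sub_self]

theorem stepLength_mul_direction_map (h : IsConjugateGradient B T r p α β)
    (hT : B.IsSelfAdjoint T) (i : ℕ) (v : V) :
    α i * B (p i) (T v) = B (r i) v - B (r (i + 1)) v := by
  simp [h.residual_succ i, hT (p i) v]

theorem direction_conjugate_succ (h : IsConjugateGradient B T r p α β) (hT : B.IsSelfAdjoint T)
    {k : ℕ} (hres : ∀ i ≤ k, B (r i) (r i) ≠ 0) (hcurv : ∀ i ≤ k, B (p i) (T (p i)) ≠ 0)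
    (horth : ∀ i ≤ k, B (r i) (r (k + 1)) = 0) (hconj : ∀ i < k, B (p i) (T (p k)) = 0)
    {i : ℕ} (hi : i ≤ k) : B (p i) (T (p (k + 1))) = 0 := by
  have stepLength_ne_zero : α i ≠ 0 := by
    rw [h.stepLength_eq]
    exact div_ne_zero (hres i hi) (hcurv i hi)
  have expand : α i * B (p i) (T (p (k + 1))) =
      β k * (α i * B (p i) (T (p k))) - B (r (i + 1)) (r (k + 1)) := by
    have residual_part := h.stepLength_mul_direction_map hT i (r (k + 1))
    rw [horth i hi] at residual_part
    simp only [h.direction_succ k, map_add, map_smul, smul_eq_mul]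
    linear_combination residual_part
  refine (mul_eq_zero.mp ?_).resolve_left stepLength_ne_zero
  rcases hi.lt_or_eq with hlt | rfl
  · rw [expand, hconj i hlt, horth (i + 1) hlt, mul_zero, mul_zero, sub_zero]
  · rw [expand, h.stepLength_mul_curvature (hcurv i hi), h.update_mul_residual (hres i hi),
      sub_self]

theorem residual_orthogonal_and_direction_conjugate (h : IsConjugateGradient B T r p α β)
    (hT : B.IsSelfAdjoint T) {k : ℕ} (hres : ∀ i < k, B (r i) (r i) ≠ 0)
    (hcurv : ∀ i < k, B (p i) (T (p i)) ≠ 0) :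
    (∀ i < k, B (r i) (r k) = 0) ∧ ∀ i < k, B (p i) (T (p k)) = 0 := by
  induction k with
  | zero => simp
  | succ k ih =>
    simp only [Nat.lt_succ_iff] at hres hcurv ⊢
    obtain ⟨horth, hconj⟩ := ih (fun i hi => hres i hi.le) (fun i hi => hcurv i hi.le)
    have horth_succ : ∀ i ≤ k, B (r i) (r (k + 1)) = 0 := fun i hi =>
      h.residual_orthogonal_succ (hcurv k le_rfl) horth hconj hi
    exact ⟨horth_succ, fun i hi => h.direction_conjugate_succ hT hres hcurv horth_succ hconj hi⟩

theorem residual_orthogonal (h : IsConjugateGradient B T r p α β) (hB : B.IsRefl)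
    (hT : B.IsSelfAdjoint T) {ℓ : ℕ} (hres : ∀ k < ℓ, B (r k) (r k) ≠ 0)
    (hcurv : ∀ k < ℓ, B (p k) (T (p k)) ≠ 0) {i j : ℕ} (hi : i ≤ ℓ) (hj : j ≤ ℓ) (hij : i ≠ j) :
    B (r i) (r j) = 0 := by
  have orthogonal_of_lt {i j : ℕ} (hlt : i < j) (hj : j ≤ ℓ) : B (r i) (r j) = 0 :=
    (h.residual_orthogonal_and_direction_conjugate hT (fun k hk => hres k (hk.trans_le hj))
      (fun k hk => hcurv k (hk.trans_le hj))).1 i hlt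
  rcases hij.lt_or_gt with hlt | hgt
  · exact orthogonal_of_lt hlt hj
  · exact hB _ _ (orthogonal_of_lt hgt hi)

end IsConjugateGradient

section MatrixPowers

variable {ι : Type*} [Fintype ι] [DecidableEq ι]

theorem dotProduct_pow_add_mulVec {R : Type*} [CommSemiring R] {A : Matrix ι ι R} (hA : A.IsSymm)
    (i j : ℕ) (u v : ι → R) : u ⬝ᵥ (A ^ (i + j)) *ᵥ v = (A ^ i) *ᵥ u ⬝ᵥ (A ^ j) *ᵥ v := by
  rw [pow_add, ← mulVec_mulVec, dotProduct_mulVec, ← mulVec_transpose, (hA.pow i).eq]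

theorem isSelfAdjoint_toBilin'_pow {R : Type*} [CommRing R] {A : Matrix ι ι R} (hA : A.IsSymm)
    (m : ℕ) : (toBilin' (A ^ m)).IsSelfAdjoint (toLin' A) := by
  refine (isAdjointPair_toLinearMap₂' (A ^ m) (A ^ m) A A).mpr ?_
  rw [Matrix.IsAdjointPair, hA.eq, ← pow_succ', ← pow_succ]

theorem toBilin'_odd_pow_apply_toLin' {R : Type*} [CommSemiring R] {A : Matrix ι ι R}
    (hA : A.IsSymm) (m : ℕ) (u : ι → R) :
    toBilin' (A ^ (2 * m + 1)) u (toLin' A u) = (A ^ (m + 1)) *ᵥ u ⬝ᵥ (A ^ (m + 1)) *ᵥ u := by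
  rw [toBilin'_apply', toLin'_apply, mulVec_mulVec, ← pow_succ, ← dotProduct_pow_add_mulVec hA,
    show 2 * m + 1 + 1 = (m + 1) + (m + 1) by ring]

theorem toBilin'_odd_pow_eq_zero_of_isotropic {R : Type*} [CommRing R] [LinearOrder R]
    [IsStrictOrderedRing R] {A : Matrix ι ι R} (hA : A.IsSymm) (m : ℕ) (u : ι → R)
    (hu : toBilin' (A ^ (2 * m + 1)) u (toLin' A u) = 0) (v : ι → R) :
    toBilin' (A ^ (2 * m + 1)) v u = 0 := by
  rw [toBilin'_odd_pow_apply_toLin' hA, dotProduct_self_eq_zero] at hu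
  rw [toBilin'_apply', show 2 * m + 1 = m + (m + 1) by ring, dotProduct_pow_add_mulVec hA, hu,
    dotProduct_zero]

theorem car_residuals_A3_orthogonal_general {K : Type*} [Field K] [LinearOrder K]
    [IsStrictOrderedRing K] {A : Matrix ι ι K} (hA : A.IsSymm) (m : ℕ) {r p : ℕ → ι → K}
    {ρ α β : ℕ → K} (hp0 : p 0 = r 0) (hρ : ∀ k, ρ k = r k ⬝ᵥ (A ^ (2 * m + 1)) *ᵥ r k)
    (hα : ∀ k, α k = ρ k / ((A ^ (m + 1)) *ᵥ p k ⬝ᵥ (A ^ (m + 1)) *ᵥ p k))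
    (hr : ∀ k, r (k + 1) = r k - α k • A *ᵥ p k) (hβ : ∀ k, β k = ρ (k + 1) / ρ k)
    (hp : ∀ k, p (k + 1) = r (k + 1) + β k • p k) {ℓ : ℕ} (hne : ∀ k < ℓ, ρ k ≠ 0) :
    ∀ i ≤ ℓ, ∀ j ≤ ℓ, i ≠ j → r i ⬝ᵥ (A ^ (2 * m + 1)) *ᵥ r j = 0 := by
  set B := toBilin' (A ^ (2 * m + 1))
  have hB : B.IsSymm := isSymm_toBilin'_iff_isSymm.mpr (hA.pow _)
  have hT : B.IsSelfAdjoint (toLin' A) := isSelfAdjoint_toBilin'_pow hA _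
  have hρB (k : ℕ) : ρ k = B (r k) (r k) := by rw [hρ, toBilin'_apply']
  have hCG : IsConjugateGradient B (toLin' A) r p α β :=
    { direction_zero := hp0
      stepLength_eq k := by rw [toBilin'_odd_pow_apply_toLin' hA, ← hρB, hα]
      residual_succ k := by rw [toLin'_apply, hr]
      update_eq k := by rw [← hρB, ← hρB, hβ]
      direction_succ := hp }
  simp only [hρB] at hne
  have hcurv := hCG.curvature_ne_zero hT (toBilin'_odd_pow_eq_zero_of_isotropic hA m) hne
  intro i hi j hj hij
  rw [← toBilin'_apply']
  exact hCG.residual_orthogonal hB.isRefl hT hne hcurv hi hj hij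

end MatrixPowers

/-- Paper: Theorem 6.3(c).  cAr iteration for SPD `A` (with `ρ_k = r_kᵀA³r_k`,
`α_k = ρ_k/‖A²p_k‖²`, `β_k = ρ_{k+1}/ρ_k`), terminating at step `ℓ ≤ n`
(`r_k ≠ 0` for `k < ℓ` and `r_ℓ = 0`):  the residuals are `A³`-orthogonal: `r_iᵀ A³ r_j = 0` for `i ≠ j`. -/
theorem car_residuals_A3_orthogonal (n ℓ : ℕ) (hℓn : ℓ ≤ n)
    (A : Matrix (Fin n) (Fin n) ℝ) (hA : A.PosDef) (b : Fin n → ℝ)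
    (x r p : ℕ → (Fin n → ℝ)) (ρ α β : ℕ → ℝ)
    (hx0 : x 0 = 0) (hr0 : r 0 = b) (hp0 : p 0 = b)
    (hρ : ∀ k, ρ k = r k ⬝ᵥ (A ^ 3).mulVec (r k))
    (hα : ∀ k, α k = ρ k / ((A ^ 2).mulVec (p k) ⬝ᵥ (A ^ 2).mulVec (p k)))
    (hx : ∀ k, x (k + 1) = x k + α k • p k)
    (hr : ∀ k, r (k + 1) = r k - α k • A.mulVec (p k))
    (hβ : ∀ k, β k = ρ (k + 1) / ρ k)
    (hp : ∀ k, p (k + 1) = r (k + 1) + β k • p k)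
    (hne : ∀ k < ℓ, r k ≠ 0) (hfin : r ℓ = 0) :
    ∀ i ≤ ℓ, ∀ j ≤ ℓ, i ≠ j → r i ⬝ᵥ (A ^ 3).mulVec (r j) = 0 := by
  exact car_residuals_A3_orthogonal_general (isHermitian_iff_isSymm.mp hA.isHermitian) 1
    (hp0.trans hr0.symm) hρ hα hr hβ hp fun k hk =>
      hρ k ▸ ((posDef_pow hA 3).dotProduct_mulVec_pos (hne k hk)).ne'
end

section
/- For all i, j ≤ ℓ, the cAr directions satisfy p_iᵀA³p_j ≥ 0. -/
open Matrix

/-!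
With respect to the inner product `⟨u, v⟩ = uᵀA³v`, for which `A` is again self-adjoint and positive
definite, the cAr iteration is the conjugate gradient method: `‖A²p‖² = ⟨p, Ap⟩`. Hence the residual
`r_{j+1}` is orthogonal to every `p_i` with `i ≤ j`, and pairing `p_{j+1} = r_{j+1} + β_j p_j` with
`p_i` gives `⟨p_{j+1}, p_i⟩ = β_j ⟨p_j, p_i⟩` with `β_j ≥ 0`. Nonnegativity propagates from
`⟨p_i, p_i⟩ ≥ 0`.
-/

section ConjugateGradient

variable {𝕜 E : Type*} [Field 𝕜] [AddCommGroup E] [Module 𝕜 E]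

/-- The recurrences of the conjugate gradient method for the operator `T`, run in the inner product
`B`, with residuals `r`, search directions `p`, step lengths `α` and direction updates `β`. The
iterates `x` are left out, as no recurrence depends on them. Once a residual vanishes the quotients
are `0 / 0 = 0`. -/
structure IsConjugateGradient_s12 (B : LinearMap.BilinForm 𝕜 E) (T : E →ₗ[𝕜] E) (r p : ℕ → E)
    (α β : ℕ → 𝕜) : Prop where
  direction_zero : p 0 = r 0
  stepLength_eq : ∀ k, α k = B (r k) (r k) / B (p k) (T (p k))
  residual_succ : ∀ k, r (k + 1) = r k - α k • T (p k)
  update_eq : ∀ k, β k = B (r (k + 1)) (r (k + 1)) / B (r k) (r k)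
  direction_succ : ∀ k, p (k + 1) = r (k + 1) + β k • p k

namespace IsConjugateGradient_s12

variable {B : LinearMap.BilinForm 𝕜 E} {T : E →ₗ[𝕜] E} {r p : ℕ → E} {α β : ℕ → 𝕜} {k ℓ : ℕ}

lemma apply_residual_direction_self (h : IsConjugateGradient_s12 B T r p α β)
    (hrp : ∀ i < k, B (r k) (p i) = 0) : B (r k) (p k) = B (r k) (r k) := by
  cases k with
  | zero => rw [h.direction_zero]
  | succ k => simp [h.direction_succ k, hrp k k.lt_succ_self]

lemma apply_residual_residual_eq_zero (h : IsConjugateGradient_s12 B T r p α β)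
    (hrp : ∀ i < k, B (r k) (p i) = 0) {i : ℕ} (hi : i < k) : B (r k) (r i) = 0 := by
  cases i with
  | zero => rw [← h.direction_zero, hrp 0 hi]
  | succ i =>
    have hri : r (i + 1) = p (i + 1) - β i • p i := eq_sub_of_add_eq (h.direction_succ i).symm
    simp [hri, hrp (i + 1) hi, hrp i (by omega)]

lemma stepLength_mul_apply_map (h : IsConjugateGradient_s12 B T r p α β) (v : E) (i : ℕ) :
    α i * B v (T (p i)) = B v (r i) - B v (r (i + 1)) := by
  simp [h.residual_succ i]

lemma apply_residual_succ_direction_eq_zero (h : IsConjugateGradient_s12 B T r p α β)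
    (hT : B.IsSelfAdjoint T) (hrp : ∀ i < k, B (r k) (p i) = 0)
    (hpp : ∀ i < k, B (p k) (T (p i)) = 0) (hpk : B (p k) (T (p k)) ≠ 0) :
    ∀ i < k + 1, B (r (k + 1)) (p i) = 0 := by
  intro i hi
  have expand : B (r (k + 1)) (p i) = B (r k) (p i) - α k * B (p k) (T (p i)) := by
    simp [h.residual_succ k, hT (p k) (p i)]
  rcases Nat.lt_succ_iff_lt_or_eq.mp hi with hik | rfl
  · rw [expand, hrp i hik, hpp i hik, mul_zero, sub_zero]
  · rw [expand, h.apply_residual_direction_self hrp, h.stepLength_eq, div_mul_cancel₀ _ hpk,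
      sub_self]

lemma apply_direction_succ_map_eq_zero (h : IsConjugateGradient_s12 B T r p α β)
    (hrp : ∀ i < k + 1, B (r (k + 1)) (p i) = 0) (hpp : ∀ i < k, B (p k) (T (p i)) = 0)
    (hα : ∀ i < k + 1, α i ≠ 0) : ∀ i < k + 1, B (p (k + 1)) (T (p i)) = 0 := by
  intro i hi
  have expand : B (p (k + 1)) (T (p i)) = B (r (k + 1)) (T (p i)) + β k * B (p k) (T (p i)) := by
    simp [h.direction_succ k]
  have residual_part := h.stepLength_mul_apply_map (r (k + 1)) i
  rw [h.apply_residual_residual_eq_zero hrp hi] at residual_part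
  refine (mul_eq_zero.mp ?_).resolve_left (hα i hi)
  rcases Nat.lt_succ_iff_lt_or_eq.mp hi with hik | rfl
  · rw [h.apply_residual_residual_eq_zero hrp (Nat.succ_lt_succ hik), sub_zero] at residual_part
    rw [expand, hpp i hik, mul_zero, add_zero, residual_part]
  · obtain ⟨hρ, hd⟩ := div_ne_zero_iff.mp (h.stepLength_eq i ▸ hα i hi)
    have direction_part : α i * (β i * B (p i) (T (p i))) = B (r (i + 1)) (r (i + 1)) := by
      rw [h.stepLength_eq, h.update_eq]
      field_simp
    rw [expand, mul_add, residual_part, direction_part, zero_sub, neg_add_cancel]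

lemma apply_direction_map_pos [Preorder 𝕜] (h : IsConjugateGradient_s12 B T r p α β)
    (hB : ∀ u ≠ 0, 0 < B u u) (hBT : ∀ u ≠ 0, 0 < B u (T u))
    (hrp : ∀ i < k, B (r k) (p i) = 0) (hrk : r k ≠ 0) : 0 < B (p k) (T (p k)) := by
  refine hBT _ fun hpk => (hB _ hrk).ne ?_
  rw [← h.apply_residual_direction_self hrp, hpk, map_zero]

variable [LinearOrder 𝕜] [IsStrictOrderedRing 𝕜]

lemma orthogonal_and_conjugate (h : IsConjugateGradient_s12 B T r p α β) (hT : B.IsSelfAdjoint T)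
    (hB : ∀ u ≠ 0, 0 < B u u) (hBT : ∀ u ≠ 0, 0 < B u (T u)) (hr : ∀ i < k, r i ≠ 0) :
    (∀ i < k, B (r k) (p i) = 0) ∧ ∀ i < k, B (p k) (T (p i)) = 0 := by
  induction k using Nat.strong_induction_on with
  | _ k ih =>
    cases k with
    | zero => simp
    | succ k =>
      have past (i : ℕ) (hi : i < k + 1) := ih i hi fun j hj => hr j (hj.trans hi)
      have curvature_pos (i : ℕ) (hi : i < k + 1) : 0 < B (p i) (T (p i)) :=
        h.apply_direction_map_pos hB hBT (past i hi).1 (hr i hi)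
      have stepLength_ne_zero (i : ℕ) (hi : i < k + 1) : α i ≠ 0 := by
        rw [h.stepLength_eq]
        exact (div_pos (hB _ (hr i hi)) (curvature_pos i hi)).ne'
      obtain ⟨hrp, hpp⟩ := past k k.lt_succ_self
      have orthogonal := h.apply_residual_succ_direction_eq_zero hT hrp hpp
        (curvature_pos k k.lt_succ_self).ne'
      exact ⟨orthogonal, h.apply_direction_succ_map_eq_zero orthogonal hpp stepLength_ne_zero⟩

lemma apply_direction_nonneg_of_le (h : IsConjugateGradient_s12 B T r p α β)
    (hT : B.IsSelfAdjoint T) (hB : ∀ u ≠ 0, 0 < B u u) (hBT : ∀ u ≠ 0, 0 < B u (T u))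
    {i j : ℕ} (hij : i ≤ j) (hr : ∀ k < j, r k ≠ 0) : 0 ≤ B (p j) (p i) := by
  have apply_self_nonneg (u : E) : 0 ≤ B u u := by
    rcases eq_or_ne u 0 with rfl | hu
    · simp
    · exact (hB u hu).le
  induction j, hij using Nat.le_induction with
  | base => exact apply_self_nonneg _
  | succ j hij ih =>
    have orthogonal : B (r (j + 1)) (p i) = 0 :=
      (h.orthogonal_and_conjugate hT hB hBT hr).1 i (Nat.lt_succ_of_le hij)
    have update_nonneg : 0 ≤ β j := by
      rw [h.update_eq]
      exact div_nonneg (apply_self_nonneg _) (apply_self_nonneg _)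
    calc 0 ≤ β j * B (p j) (p i) :=
          mul_nonneg update_nonneg (ih fun k hk => hr k (Nat.lt_succ_of_lt hk))
      _ = B (p (j + 1)) (p i) := by simp [h.direction_succ j, orthogonal]

lemma apply_direction_nonneg (h : IsConjugateGradient_s12 B T r p α β) (hBs : B.IsSymm)
    (hT : B.IsSelfAdjoint T) (hB : ∀ u ≠ 0, 0 < B u u) (hBT : ∀ u ≠ 0, 0 < B u (T u))
    (hr : ∀ k < ℓ, r k ≠ 0) {i j : ℕ} (hi : i ≤ ℓ) (hj : j ≤ ℓ) : 0 ≤ B (p i) (p j) := by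
  rcases le_total i j with hij | hji
  · rw [hBs.eq]
    exact h.apply_direction_nonneg_of_le hT hB hBT hij fun k hk => hr k (hk.trans_le hj)
  · exact h.apply_direction_nonneg_of_le hT hB hBT hji fun k hk => hr k (hk.trans_le hi)

end IsConjugateGradient_s12

end ConjugateGradient

section PowerWeightedForm

variable {R M : Type*} [CommSemiring R] [AddCommMonoid M] [Module R M]
  {B : LinearMap.BilinForm R M} {A : Module.End R M}

lemma isSelfAdjoint_pow (hA : B.IsSelfAdjoint A) (m : ℕ) : B.IsSelfAdjoint ↑(A ^ m) := by
  induction m with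
  | zero => exact LinearMap.isAdjointPair_one
  | succ m ih =>
    have adjoint_mul := LinearMap.IsAdjointPair.mul ih hA
    rwa [← pow_succ, ← pow_succ'] at adjoint_mul

lemma isSymm_compRight (hB : B.IsSymm) (hA : B.IsSelfAdjoint A) : (B.compRight A).IsSymm where
  eq u v := by
    rw [LinearMap.BilinForm.compRight_apply, LinearMap.BilinForm.compRight_apply, ← hA u v, hB.eq]

lemma isSelfAdjoint_compRight_of_commute {S : Module.End R M} (hA : B.IsSelfAdjoint A)
    (hAS : Commute A S) : (B.compRight S).IsSelfAdjoint A := by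
  intro u v
  rw [LinearMap.BilinForm.compRight_apply, LinearMap.BilinForm.compRight_apply, hA,
    ← Module.End.mul_apply, hAS.eq, Module.End.mul_apply]

lemma apply_pow_self_pos [Preorder R] (hA : B.IsSelfAdjoint A) (hB : ∀ u ≠ 0, 0 < B u u)
    (hBA : ∀ u ≠ 0, 0 < B u (A u)) (m : ℕ) {u : M} (hu : u ≠ 0) : 0 < B u ((A ^ m) u) := by
  induction m using Nat.twoStepInduction generalizing u with
  | zero => exact hB u hu
  | one => simpa only [pow_one] using hBA u hu
  | more m ih _ =>
    have hAu : A u ≠ 0 := fun h => (hBA u hu).ne (by rw [h, map_zero])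
    calc 0 < B (A u) ((A ^ m) (A u)) := ih hAu
      _ = B u ((A ^ (m + 2)) u) := by
        rw [hA, pow_succ, pow_succ', Module.End.mul_apply, Module.End.mul_apply]

end PowerWeightedForm

theorem car_pA3p_nonneg_general {𝕜 E : Type*} [Field 𝕜] [LinearOrder 𝕜] [IsStrictOrderedRing 𝕜]
    [AddCommGroup E] [Module 𝕜 E] {B : LinearMap.BilinForm 𝕜 E} (hBs : B.IsSymm)
    (hB : ∀ u ≠ 0, 0 < B u u) {A : Module.End 𝕜 E} (hA : B.IsSelfAdjoint A)
    (hBA : ∀ u ≠ 0, 0 < B u (A u)) {ℓ : ℕ} {r p : ℕ → E} {ρ α β : ℕ → 𝕜} (h0 : p 0 = r 0)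
    (hρ : ∀ k, ρ k = B (r k) ((A ^ 3) (r k)))
    (hα : ∀ k, α k = ρ k / B ((A ^ 2) (p k)) ((A ^ 2) (p k)))
    (hr : ∀ k, r (k + 1) = r k - α k • A (p k))
    (hβ : ∀ k, β k = ρ (k + 1) / ρ k)
    (hp : ∀ k, p (k + 1) = r (k + 1) + β k • p k)
    (hne : ∀ k < ℓ, r k ≠ 0) :
    ∀ i ≤ ℓ, ∀ j ≤ ℓ, 0 ≤ B (p i) ((A ^ 3) (p j)) := by
  have conjugateGradient : IsConjugateGradient_s12 (B.compRight (A ^ 3)) A r p α β :=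
    { direction_zero := h0
      stepLength_eq := fun k => by
        rw [hα, hρ, isSelfAdjoint_pow hA 2]
        rfl
      residual_succ := hr
      update_eq := fun k => by
        rw [hβ, hρ, hρ]
        rfl
      direction_succ := hp }
  exact fun i hi j hj => conjugateGradient.apply_direction_nonneg
    (isSymm_compRight hBs (isSelfAdjoint_pow hA 3))
    (isSelfAdjoint_compRight_of_commute hA (Commute.self_pow A 3))
    (fun _ => apply_pow_self_pos hA hB hBA 3) (fun _ => apply_pow_self_pos hA hB hBA 4)
    hne hi hj

section Matrix

variable {ι R : Type*} [Fintype ι]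

lemma isSymm_dotProductBilin [CommSemiring R] :
    LinearMap.BilinForm.IsSymm (dotProductBilin (m := ι) R R) where
  eq u v := dotProduct_comm u v

lemma isSelfAdjoint_toLin'_of_isSymm [DecidableEq ι] [CommSemiring R] {A : Matrix ι ι R}
    (hA : A.IsSymm) : LinearMap.IsSelfAdjoint (dotProductBilin (m := ι) R R) (toLin' A) := by
  intro u v
  change A *ᵥ u ⬝ᵥ v = u ⬝ᵥ A *ᵥ v
  rw [dotProduct_mulVec, ← mulVec_transpose, hA.eq]

end Matrix

/-- Paper: Theorem 6.3(f).  cAr iteration for SPD `A` (with `ρ_k = r_kᵀA³r_k`,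
`α_k = ρ_k/‖A²p_k‖²`, `β_k = ρ_{k+1}/ρ_k`), terminating at step `ℓ ≤ n`
(`r_k ≠ 0` for `k < ℓ` and `r_ℓ = 0`):  the directions satisfy `p_iᵀ A³ p_j ≥ 0`. -/
theorem car_pA3p_nonneg (n ℓ : ℕ) (hℓn : ℓ ≤ n)
    (A : Matrix (Fin n) (Fin n) ℝ) (hA : A.PosDef) (b : Fin n → ℝ)
    (x r p : ℕ → (Fin n → ℝ)) (ρ α β : ℕ → ℝ)
    (hx0 : x 0 = 0) (hr0 : r 0 = b) (hp0 : p 0 = b)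
    (hρ : ∀ k, ρ k = r k ⬝ᵥ (A ^ 3).mulVec (r k))
    (hα : ∀ k, α k = ρ k / ((A ^ 2).mulVec (p k) ⬝ᵥ (A ^ 2).mulVec (p k)))
    (hx : ∀ k, x (k + 1) = x k + α k • p k)
    (hr : ∀ k, r (k + 1) = r k - α k • A.mulVec (p k))
    (hβ : ∀ k, β k = ρ (k + 1) / ρ k)
    (hp : ∀ k, p (k + 1) = r (k + 1) + β k • p k)
    (hne : ∀ k < ℓ, r k ≠ 0) (hfin : r ℓ = 0) :
    ∀ i ≤ ℓ, ∀ j ≤ ℓ, 0 ≤ p i ⬝ᵥ (A ^ 3).mulVec (p j) := by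
  simp only [← toLin'_apply, toLin'_pow, ← dotProductBilin_apply_apply ℝ ℝ] at hρ hα hr ⊢
  exact car_pA3p_nonneg_general isSymm_dotProductBilin
    (fun u hu => dotProduct_star_self_pos_iff.mpr hu)
    (isSelfAdjoint_toLin'_of_isSymm hA.isHermitian) (fun u hu => hA.dotProduct_mulVec_pos hu)
    (hp0.trans hr0.symm) hρ hα hr hβ hp hne
end

section
/- For all i, j ≤ ℓ, the cAr directions satisfy p_iᵀAp_j ≥ 0. -/
open Matrix

/-!
For a positive operator `T` write `⟨u, v⟩_q = ⟨u, T ^ q v⟩`, so that `⟨T u, v⟩_q = ⟨u, v⟩_{q + 1}`.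
The iteration is the conjugate gradient method for the form `⟨·, ·⟩_m` (with `m = 3` for cAr), so
its directions are `⟨·, ·⟩_{m + 1}`-orthogonal, and `⟨p i, p j⟩_{m + 1} ≥ 0`. Nonnegativity then
descends from `q + 1` to `q`: the residual `r i` is the sum of the `α k • T (p k)` over `i ≤ k < ℓ`,
so `⟨r i, p j⟩_q ≥ 0`, and each direction is a nonnegative combination of residuals.
-/

open scoped InnerProductSpace

section PositivePowers

variable {E : Type*} [NormedAddCommGroup E] [InnerProductSpace ℝ E] {T : E →ₗ[ℝ] E}

theorem inner_apply_pow_apply (hT : T.IsSymmetric) (q : ℕ) (u v : E) :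
    ⟪T u, (T ^ q) v⟫_ℝ = ⟪u, (T ^ (q + 1)) v⟫_ℝ := by
  rw [hT, pow_succ', Module.End.mul_apply]

theorem inner_pow_add_two_apply (hT : T.IsSymmetric) (q : ℕ) (u v : E) :
    ⟪u, (T ^ (q + 2)) v⟫_ℝ = ⟪T u, (T ^ q) (T v)⟫_ℝ := by
  rw [inner_apply_pow_apply hT, ← Module.End.mul_apply, ← pow_succ]

theorem inner_pow_apply_comm (hT : T.IsSymmetric) (q : ℕ) (u v : E) :
    ⟪u, (T ^ q) v⟫_ℝ = ⟪v, (T ^ q) u⟫_ℝ := by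
  rw [← hT.pow q u v, real_inner_comm]

theorem inner_pow_apply_self_nonneg (hT : T.IsPositive) (q : ℕ) (u : E) :
    0 ≤ ⟪u, (T ^ q) u⟫_ℝ := by
  induction q using Nat.twoStepInduction generalizing u with
  | zero => exact real_inner_self_nonneg
  | one => simpa using hT.inner_nonneg_right u
  | more q ih _ => simpa only [inner_pow_add_two_apply hT.isSymmetric] using ih (T u)

theorem apply_eq_zero_of_inner_apply_self_eq_zero (hT : T.IsPositive) {u : E}
    (hu : ⟪T u, u⟫_ℝ = 0) : T u = 0 := by
  have cauchy_schwarz : ⟪T u, T u⟫_ℝ ^ 2 ≤ ⟪T u, u⟫_ℝ * ⟪T (T u), T u⟫_ℝ :=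
    LinearMap.BilinForm.apply_sq_le_of_symm (innerₗ E ∘ₗ T) hT.inner_nonneg_left
      ⟨fun x y => by simpa [real_inner_comm] using hT.isSymmetric x y⟩ u (T u)
  rw [hu, zero_mul] at cauchy_schwarz
  exact inner_self_eq_zero.mp ((sq_nonpos_iff _).mp cauchy_schwarz)

theorem apply_ne_zero_of_mem_range (hT : T.IsSymmetric) {u : E} (hu : u ∈ T.range)
    (hne : u ≠ 0) : T u ≠ 0 := fun hTu =>
  hne <| Submodule.disjoint_def.mp T.range.orthogonal_disjoint u hu (hT.orthogonal_range ▸ hTu)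

theorem inner_pow_apply_self_pos (hT : T.IsPositive) (q : ℕ) {u : E} (hu : u ∈ T.range)
    (hne : u ≠ 0) : 0 < ⟪u, (T ^ q) u⟫_ℝ := by
  have hTu {v : E} : v ∈ T.range → v ≠ 0 → T v ≠ 0 := apply_ne_zero_of_mem_range hT.isSymmetric
  induction q using Nat.twoStepInduction generalizing u with
  | zero => exact real_inner_self_pos.mpr hne
  | one =>
    refine (inner_pow_apply_self_nonneg hT 1 u).lt_of_ne' fun h => hTu hu hne ?_
    exact apply_eq_zero_of_inner_apply_self_eq_zero hT (by rwa [hT.isSymmetric, ← pow_one T])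
  | more q ih _ =>
    rw [inner_pow_add_two_apply hT.isSymmetric]
    exact ih (LinearMap.mem_range_self T u) (hTu hu hne)

end PositivePowers

section Iteration

variable {E : Type*} [NormedAddCommGroup E] [InnerProductSpace ℝ E]

/-- The residuals `r`, directions `p` and coefficients `α`, `β` of a conjugate direction method
for the operator `T` that terminates at step `ℓ`. The exponent `m` selects the method: `m = 0` is
the conjugate gradient method, `m = 1` the conjugate residual method, and `m = 3` is cAr. The
recurrences are only imposed for `k < ℓ`, before a denominator can vanish. -/
structure IsConjugateIteration (T : E →ₗ[ℝ] E) (m ℓ : ℕ) (r p : ℕ → E) (α β : ℕ → ℝ) :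
    Prop where
  direction_zero : p 0 = r 0
  alpha_eq : ∀ k < ℓ, α k = ⟪r k, (T ^ m) (r k)⟫_ℝ / ⟪p k, (T ^ (m + 1)) (p k)⟫_ℝ
  residual_succ : ∀ k < ℓ, r (k + 1) = r k - α k • T (p k)
  beta_eq : ∀ k < ℓ, β k = ⟪r (k + 1), (T ^ m) (r (k + 1))⟫_ℝ / ⟪r k, (T ^ m) (r k)⟫_ℝ
  direction_succ : ∀ k < ℓ, p (k + 1) = r (k + 1) + β k • p k
  residual_ne_zero : ∀ k < ℓ, r k ≠ 0
  residual_last : r ℓ = 0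

/-- The orthogonality relations at step `k` of a conjugate direction method with exponent `m`: the
residual and the direction are orthogonal to all earlier directions, for the forms given by
`T ^ m` and `T ^ (m + 1)` respectively. -/
structure IsConjugateAt (T : E →ₗ[ℝ] E) (m : ℕ) (r p : ℕ → E) (k : ℕ) : Prop where
  residual : ∀ i < k, ⟪r k, (T ^ m) (p i)⟫_ℝ = 0
  direction : ∀ i < k, ⟪p k, (T ^ (m + 1)) (p i)⟫_ℝ = 0

namespace IsConjugateIteration

variable {T : E →ₗ[ℝ] E} {m ℓ : ℕ} {r p : ℕ → E} {α β : ℕ → ℝ} {i j k q : ℕ}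

theorem alpha_nonneg (h : IsConjugateIteration T m ℓ r p α β) (hT : T.IsPositive) (hk : k < ℓ) :
    0 ≤ α k :=
  h.alpha_eq k hk ▸
    div_nonneg (inner_pow_apply_self_nonneg hT _ _) (inner_pow_apply_self_nonneg hT _ _)

theorem beta_nonneg (h : IsConjugateIteration T m ℓ r p α β) (hT : T.IsPositive) (hk : k < ℓ) :
    0 ≤ β k :=
  h.beta_eq k hk ▸
    div_nonneg (inner_pow_apply_self_nonneg hT _ _) (inner_pow_apply_self_nonneg hT _ _)

theorem residual_eq_add (h : IsConjugateIteration T m ℓ r p α β) (hk : k < ℓ) :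
    r k = r (k + 1) + α k • T (p k) := by
  rw [h.residual_succ k hk, sub_add_cancel]

theorem residual_mem_range (h : IsConjugateIteration T m ℓ r p α β) (hk : k ≤ ℓ) :
    r k ∈ T.range := by
  induction hk using Nat.decreasingInduction with
  | self => exact h.residual_last ▸ zero_mem _
  | of_succ k hk ih =>
    rw [h.residual_eq_add hk]
    exact add_mem ih (Submodule.smul_mem _ _ (LinearMap.mem_range_self T _))

theorem direction_mem_range (h : IsConjugateIteration T m ℓ r p α β) (hk : k ≤ ℓ) :
    p k ∈ T.range := by
  induction k with
  | zero => exact h.direction_zero ▸ h.residual_mem_range hk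
  | succ k ih =>
    rw [h.direction_succ k hk]
    exact add_mem (h.residual_mem_range hk) (Submodule.smul_mem _ _ (ih (by lia)))

theorem inner_residual_self_pos (h : IsConjugateIteration T m ℓ r p α β) (hT : T.IsPositive)
    (hk : k < ℓ) : 0 < ⟪r k, (T ^ m) (r k)⟫_ℝ :=
  inner_pow_apply_self_pos hT m (h.residual_mem_range hk.le) (h.residual_ne_zero k hk)

theorem inner_residual_direction_self (h : IsConjugateIteration T m ℓ r p α β) (hk : k ≤ ℓ)
    (hconj : IsConjugateAt T m r p k) : ⟪r k, (T ^ m) (p k)⟫_ℝ = ⟪r k, (T ^ m) (r k)⟫_ℝ := by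
  cases k with
  | zero => rw [h.direction_zero]
  | succ k =>
    rw [h.direction_succ k hk, map_add, map_smul, inner_add_right, inner_smul_right,
      hconj.residual k k.lt_succ_self, mul_zero, add_zero]

theorem inner_direction_self_pos (h : IsConjugateIteration T m ℓ r p α β) (hT : T.IsPositive)
    (hk : k < ℓ) (hconj : IsConjugateAt T m r p k) : 0 < ⟪p k, (T ^ (m + 1)) (p k)⟫_ℝ := by
  refine inner_pow_apply_self_pos hT _ (h.direction_mem_range hk.le) fun hp => ?_
  have hρ := h.inner_residual_self_pos hT hk
  rw [← h.inner_residual_direction_self hk.le hconj, hp, map_zero, inner_zero_right] at hρ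
  exact hρ.false

theorem alpha_mul_inner_direction_self (h : IsConjugateIteration T m ℓ r p α β)
    (hT : T.IsPositive) (hk : k < ℓ) (hconj : IsConjugateAt T m r p k) :
    α k * ⟪p k, (T ^ (m + 1)) (p k)⟫_ℝ = ⟪r k, (T ^ m) (r k)⟫_ℝ := by
  rw [h.alpha_eq k hk, div_mul_cancel₀ _ (h.inner_direction_self_pos hT hk hconj).ne']

theorem inner_residual_succ_direction (h : IsConjugateIteration T m ℓ r p α β)
    (hT : T.IsPositive) (hk : k < ℓ) (hconj : IsConjugateAt T m r p k) (hi : i < k + 1) :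
    ⟪r (k + 1), (T ^ m) (p i)⟫_ℝ = 0 := by
  rw [h.residual_succ k hk, inner_sub_left, real_inner_smul_left,
    inner_apply_pow_apply hT.isSymmetric]
  obtain hlt | rfl := Nat.lt_succ_iff_lt_or_eq.mp hi
  · rw [hconj.residual i hlt, hconj.direction i hlt, mul_zero, sub_zero]
  · rw [h.inner_residual_direction_self hk.le hconj, h.alpha_mul_inner_direction_self hT hk hconj,
      sub_self]

theorem inner_residual_residual (h : IsConjugateIteration T m ℓ r p α β) (hk : k ≤ ℓ)
    (horth : ∀ j < k, ⟪r k, (T ^ m) (p j)⟫_ℝ = 0) (hi : i < k) :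
    ⟪r k, (T ^ m) (r i)⟫_ℝ = 0 := by
  cases i with
  | zero => rw [← h.direction_zero, horth 0 hi]
  | succ i =>
    have hri : r (i + 1) = p (i + 1) - β i • p i := by
      rw [h.direction_succ i (by lia), add_sub_cancel_right]
    rw [hri, map_sub, map_smul, inner_sub_right, inner_smul_right, horth _ hi,
      horth i (by lia), mul_zero, sub_zero]

theorem alpha_mul_inner_direction (h : IsConjugateIteration T m ℓ r p α β) (hi : i < ℓ) (v : E) :
    α i * ⟪v, (T ^ (m + 1)) (p i)⟫_ℝ = ⟪v, (T ^ m) (r i)⟫_ℝ - ⟪v, (T ^ m) (r (i + 1))⟫_ℝ := by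
  rw [h.residual_eq_add hi, map_add, map_smul, inner_add_right, inner_smul_right,
    ← Module.End.mul_apply, ← pow_succ, add_sub_cancel_left]

theorem inner_direction_succ_direction (h : IsConjugateIteration T m ℓ r p α β)
    (hT : T.IsPositive) (hk : k < ℓ) (hconj : ∀ j ≤ k, IsConjugateAt T m r p j)
    (hi : i < k + 1) : ⟪p (k + 1), (T ^ (m + 1)) (p i)⟫_ℝ = 0 := by
  have horth {j : ℕ} : j < k + 1 → ⟪r (k + 1), (T ^ m) (r j)⟫_ℝ = 0 :=
    h.inner_residual_residual hk fun _ =>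
      h.inner_residual_succ_direction hT hk (hconj k le_rfl)
  have hconj_i : IsConjugateAt T m r p i := hconj i (by lia)
  have hiℓ : i < ℓ := by lia
  have alpha_ne_zero : α i ≠ 0 := by
    refine left_ne_zero_of_mul (b := ⟪p i, (T ^ (m + 1)) (p i)⟫_ℝ) ?_
    rw [h.alpha_mul_inner_direction_self hT hiℓ hconj_i]
    exact (h.inner_residual_self_pos hT hiℓ).ne'
  refine (mul_eq_zero.mp ?_).resolve_left alpha_ne_zero
  rw [h.direction_succ k hk, inner_add_left, real_inner_smul_left, mul_add,
    h.alpha_mul_inner_direction hiℓ, horth hi]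
  obtain hlt | rfl := Nat.lt_succ_iff_lt_or_eq.mp hi
  · rw [horth (by lia), (hconj k le_rfl).direction i hlt]
    simp
  · rw [mul_left_comm, h.alpha_mul_inner_direction_self hT hk hconj_i, h.beta_eq i hk,
      div_mul_cancel₀ _ (h.inner_residual_self_pos hT hk).ne']
    simp

theorem isConjugateAt (h : IsConjugateIteration T m ℓ r p α β) (hT : T.IsPositive)
    (hk : k ≤ ℓ) : IsConjugateAt T m r p k := by
  induction k using Nat.strong_induction_on with
  | _ k ih =>
    cases k with
    | zero => exact ⟨fun _ hi => absurd hi (Nat.not_lt_zero _),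
        fun _ hi => absurd hi (Nat.not_lt_zero _)⟩
    | succ k =>
      have hconj : ∀ j ≤ k, IsConjugateAt T m r p j := fun j hj => ih j (by lia) (by lia)
      exact ⟨fun _ => h.inner_residual_succ_direction hT hk (hconj k le_rfl),
        fun _ => h.inner_direction_succ_direction hT hk hconj⟩

theorem inner_direction_direction_succ_nonneg (h : IsConjugateIteration T m ℓ r p α β)
    (hT : T.IsPositive) (hi : i ≤ ℓ) (hj : j ≤ ℓ) :
    0 ≤ ⟪p i, (T ^ (m + 1)) (p j)⟫_ℝ := by
  rcases lt_trichotomy i j with hij | rfl | hji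
  · rw [inner_pow_apply_comm hT.isSymmetric]
    exact ((h.isConjugateAt hT hj).direction i hij).ge
  · exact inner_pow_apply_self_nonneg hT _ _
  · exact ((h.isConjugateAt hT hi).direction j hji).ge

theorem inner_residual_nonneg (h : IsConjugateIteration T m ℓ r p α β) (hT : T.IsPositive)
    {v : E} (hv : ∀ k ≤ ℓ, 0 ≤ ⟪p k, (T ^ (q + 1)) v⟫_ℝ) (hi : i ≤ ℓ) :
    0 ≤ ⟪r i, (T ^ q) v⟫_ℝ := by
  induction hi using Nat.decreasingInduction with
  | self => rw [h.residual_last, inner_zero_left]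
  | of_succ i hi ih =>
    rw [h.residual_eq_add hi, inner_add_left, real_inner_smul_left,
      inner_apply_pow_apply hT.isSymmetric]
    exact add_nonneg ih (mul_nonneg (h.alpha_nonneg hT hi) (hv i hi.le))

theorem inner_direction_nonneg (h : IsConjugateIteration T m ℓ r p α β) (hT : T.IsPositive)
    {v : E} (hv : ∀ k ≤ ℓ, 0 ≤ ⟪p k, (T ^ (q + 1)) v⟫_ℝ) (hi : i ≤ ℓ) :
    0 ≤ ⟪p i, (T ^ q) v⟫_ℝ := by
  induction i with
  | zero => exact h.direction_zero ▸ h.inner_residual_nonneg hT hv hi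
  | succ i ih =>
    rw [h.direction_succ i hi, inner_add_left, real_inner_smul_left]
    exact add_nonneg (h.inner_residual_nonneg hT hv hi)
      (mul_nonneg (h.beta_nonneg hT hi) (ih (by lia)))

end IsConjugateIteration

theorem car_pAp_nonneg_general {T : E →ₗ[ℝ] E} (hT : T.IsPositive) {m ℓ : ℕ} {r p : ℕ → E}
    {α β : ℕ → ℝ} (h : IsConjugateIteration T m ℓ r p α β) {q : ℕ} (hq : q ≤ m + 1) {i j : ℕ}
    (hi : i ≤ ℓ) (hj : j ≤ ℓ) : 0 ≤ ⟪p i, (T ^ q) (p j)⟫_ℝ := by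
  induction hq using Nat.decreasingInduction generalizing i with
  | self => exact h.inner_direction_direction_succ_nonneg hT hi hj
  | of_succ q _ ih => exact h.inner_direction_nonneg hT (fun _ hk => ih hk) hi

end Iteration

section Matrices

variable {ι : Type*} [Fintype ι] [DecidableEq ι]

theorem inner_toLp_toEuclideanLin_pow (A : Matrix ι ι ℝ) (q : ℕ) (u v : ι → ℝ) :
    ⟪WithLp.toLp 2 u, (toEuclideanLin A ^ q) (WithLp.toLp 2 v)⟫_ℝ = u ⬝ᵥ A ^ q *ᵥ v := by
  rw [← toLpLin_pow, toLpLin_toLp, EuclideanSpace.inner_toLp_toLp, star_trivial, dotProduct_comm,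
    toLin'_apply]

theorem pow_mulVec_dotProduct_pow_mulVec {R : Type*} [CommSemiring R] {A : Matrix ι ι R}
    (hA : A.IsSymm) (a c : ℕ) (u v : ι → R) :
    (A ^ a) *ᵥ u ⬝ᵥ (A ^ c) *ᵥ v = u ⬝ᵥ A ^ (a + c) *ᵥ v := by
  rw [pow_add, ← mulVec_mulVec, dotProduct_mulVec u, ← mulVec_transpose, (hA.pow a).eq]

theorem isConjugateIteration_toLp {A : Matrix ι ι ℝ} {m ℓ : ℕ} {r p : ℕ → ι → ℝ} {α β : ℕ → ℝ}
    (h0 : p 0 = r 0)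
    (hα : ∀ k < ℓ, α k = r k ⬝ᵥ A ^ m *ᵥ r k / p k ⬝ᵥ A ^ (m + 1) *ᵥ p k)
    (hr : ∀ k < ℓ, r (k + 1) = r k - α k • A *ᵥ p k)
    (hβ : ∀ k < ℓ, β k = r (k + 1) ⬝ᵥ A ^ m *ᵥ r (k + 1) / r k ⬝ᵥ A ^ m *ᵥ r k)
    (hp : ∀ k < ℓ, p (k + 1) = r (k + 1) + β k • p k)
    (hne : ∀ k < ℓ, r k ≠ 0) (hfin : r ℓ = 0) :
    IsConjugateIteration (toEuclideanLin A) m ℓ (fun k => WithLp.toLp 2 (r k))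
      (fun k => WithLp.toLp 2 (p k)) α β where
  direction_zero := by rw [h0]
  alpha_eq k hk := by simp only [inner_toLp_toEuclideanLin_pow, hα k hk]
  residual_succ k hk := by
    simp only [hr k hk, toLpLin_toLp, toLin'_apply, WithLp.toLp_sub, WithLp.toLp_smul]
  beta_eq k hk := by simp only [inner_toLp_toEuclideanLin_pow, hβ k hk]
  direction_succ k hk := by simp only [hp k hk, WithLp.toLp_add, WithLp.toLp_smul]
  residual_ne_zero k hk := (WithLp.toLp_eq_zero 2).not.mpr (hne k hk)
  residual_last := (WithLp.toLp_eq_zero 2).mpr hfin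

end Matrices

/-- Paper: Theorem 6.3(h).  cAr iteration for SPD `A` (with `ρ_k = r_kᵀA³r_k`,
`α_k = ρ_k/‖A²p_k‖²`, `β_k = ρ_{k+1}/ρ_k`), terminating at step `ℓ ≤ n`
(`r_k ≠ 0` for `k < ℓ` and `r_ℓ = 0`):  the directions satisfy `p_iᵀ A p_j ≥ 0`. -/
theorem car_pAp_nonneg (n ℓ : ℕ) (hℓn : ℓ ≤ n)
    (A : Matrix (Fin n) (Fin n) ℝ) (hA : A.PosDef) (b : Fin n → ℝ)
    (x r p : ℕ → (Fin n → ℝ)) (ρ α β : ℕ → ℝ)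
    (hx0 : x 0 = 0) (hr0 : r 0 = b) (hp0 : p 0 = b)
    (hρ : ∀ k, ρ k = r k ⬝ᵥ (A ^ 3).mulVec (r k))
    (hα : ∀ k, α k = ρ k / ((A ^ 2).mulVec (p k) ⬝ᵥ (A ^ 2).mulVec (p k)))
    (hx : ∀ k, x (k + 1) = x k + α k • p k)
    (hr : ∀ k, r (k + 1) = r k - α k • A.mulVec (p k))
    (hβ : ∀ k, β k = ρ (k + 1) / ρ k)
    (hp : ∀ k, p (k + 1) = r (k + 1) + β k • p k)
    (hne : ∀ k < ℓ, r k ≠ 0) (hfin : r ℓ = 0) :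
    ∀ i ≤ ℓ, ∀ j ≤ ℓ, 0 ≤ p i ⬝ᵥ A.mulVec (p j) := by
  have hA_symm : A.IsSymm := isHermitian_iff_isSymm.mp hA.isHermitian
  simp only [hρ, pow_mulVec_dotProduct_pow_mulVec hA_symm] at hα hβ
  have h := isConjugateIteration_toLp (hp0.trans hr0.symm) (fun k _ => hα k) (fun k _ => hr k)
    (fun k _ => hβ k) (fun k _ => hp k) hne hfin
  intro i hi j hj
  have hnonneg := car_pAp_nonneg_general (isPositive_toEuclideanLin_iff.mpr hA.posSemidef) h
    (q := 1) (by norm_num) hi hj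
  rwa [inner_toLp_toEuclideanLin_pow, pow_one] at hnonneg
end

section
/- For all i, j ≤ ℓ, the cAr directions have nonnegative mutual inner products: p_iᵀp_j ≥ 0. -/
open Matrix

/-!
The cAr iteration is the conjugate gradient iteration in the inner product `⟨u, v⟩ = uᵀA³v`. Hence
the directions are conjugate, `p_iᵀA⁴p_j = 0` for `i ≠ j`, and in particular `p_iᵀA⁴p_j ≥ 0` always.
This sign descends along the powers of `A`: for a linear functional `f`, termination gives
`r_j = ∑_{k ≥ j} α_k A p_k` with `α_k ≥ 0`, so `f (A p_k) ≥ 0` for all `k` forces `f (r_j) ≥ 0` for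
all `j`; and each `p_j` is a nonnegative combination of `r_0, …, r_j`, so then `f (p_j) ≥ 0`.
Four descents with `f = p_iᵀA^s` lead from `A⁴` to `A⁰`.
-/

section SymmPosDef

theorem isSelfAdjoint_pow_s15 {R M : Type*} [CommSemiring R] [AddCommMonoid M] [Module R M]
    {B : LinearMap.BilinForm R M} {T : Module.End R M} (hT : LinearMap.IsSelfAdjoint B T) (m : ℕ) :
    LinearMap.IsSelfAdjoint B (T ^ m : Module.End R M) := by
  induction m with
  | zero => exact LinearMap.isAdjointPair_one
  | succ m ih =>
    have hmul := LinearMap.IsAdjointPair.mul ih hT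
    rwa [← pow_succ, ← pow_succ'] at hmul

variable {K V : Type*} [Field K] [LinearOrder K] [AddCommGroup V] [Module K V]

/-- `B` is an inner product (a symmetric positive definite form) and `T` is self-adjoint
and positive definite with respect to it. This is what conjugate gradients for `T` in the inner
product `B` require; the scalars may be any ordered field. -/
structure IsSymmPosDef (B : LinearMap.BilinForm K V) (T : Module.End K V) : Prop where
  isSymm : B.IsSymm
  isSelfAdjoint : LinearMap.IsSelfAdjoint B T
  pos : ∀ v ≠ 0, 0 < B v v
  map_pos : ∀ v ≠ 0, 0 < B v (T v)

namespace IsSymmPosDef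

variable {B : LinearMap.BilinForm K V} {T : Module.End K V}

theorem nonneg (hB : IsSymmPosDef B T) (v : V) : 0 ≤ B v v := by
  rcases eq_or_ne v 0 with rfl | hv
  · simp
  · exact (hB.pos v hv).le

theorem map_nonneg (hB : IsSymmPosDef B T) (v : V) : 0 ≤ B v (T v) := by
  rcases eq_or_ne v 0 with rfl | hv
  · simp
  · exact (hB.map_pos v hv).le

theorem map_ne_zero (hB : IsSymmPosDef B T) {v : V} (hv : v ≠ 0) : T v ≠ 0 := fun hTv =>
  (hB.map_pos v hv).ne' (by rw [hTv, map_zero])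

theorem pow_pos (hB : IsSymmPosDef B T) (m : ℕ) {v : V} (hv : v ≠ 0) : 0 < B v ((T ^ m) v) := by
  induction m using Nat.twoStepInduction generalizing v with
  | zero => exact hB.pos v hv
  | one => simpa only [pow_one] using hB.map_pos v hv
  | more m ih _ =>
    have hTv : 0 < B (T v) ((T ^ m) (T v)) := ih (hB.map_ne_zero hv)
    rwa [hB.isSelfAdjoint, ← Module.End.mul_apply, ← Module.End.mul_apply, ← pow_succ',
      ← pow_succ] at hTv

theorem compRight_pow (hB : IsSymmPosDef B T) (m : ℕ) : IsSymmPosDef (B.compRight (T ^ m)) T where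
  isSymm := ⟨fun u v => by
    rw [B.compRight_apply, B.compRight_apply, ← isSelfAdjoint_pow_s15 hB.isSelfAdjoint m, hB.isSymm.eq]⟩
  isSelfAdjoint u v := by
    rw [B.compRight_apply, B.compRight_apply, hB.isSelfAdjoint, ← Module.End.mul_apply,
      ← Module.End.mul_apply, ← pow_succ', ← pow_succ]
  pos _ hv := hB.pow_pos m hv
  map_pos v hv := by
    rw [B.compRight_apply, ← Module.End.mul_apply, ← pow_succ]
    exact hB.pow_pos (m + 1) hv

end IsSymmPosDef

end SymmPosDef

section ConjGrad

variable {K V : Type*} [Field K] [AddCommGroup V] [Module K V]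

/-- The conjugate gradient iteration for the operator `T` in the inner product `B`, with residuals
`r`, directions `p`, step lengths `α` and direction coefficients `β`. For `T = A`, the form `uᵀv`
gives the conjugate gradient method, `uᵀAv` the conjugate residual method and `uᵀA³v` the cAr
iteration. Once a residual vanishes the quotients take the value `x / 0 = 0`. -/
structure IsConjGradIteration_s15 (B : LinearMap.BilinForm K V) (T : Module.End K V)
    (r p : ℕ → V) (α β : ℕ → K) : Prop where
  direction_zero : p 0 = r 0
  step_eq : ∀ k, α k = B (r k) (r k) / B (p k) (T (p k))
  residual_succ : ∀ k, r (k + 1) = r k - α k • T (p k)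
  coeff_eq : ∀ k, β k = B (r (k + 1)) (r (k + 1)) / B (r k) (r k)
  direction_succ : ∀ k, p (k + 1) = r (k + 1) + β k • p k

/-- The `k`-th residual is `B`-orthogonal, and the `k`-th direction `B(·, T ·)`-conjugate, to all
earlier directions: the induction invariant of the conjugate gradient iteration. -/
structure ConjugateAt (B : LinearMap.BilinForm K V) (T : Module.End K V) (r p : ℕ → V) (k : ℕ) :
    Prop where
  residual_direction : ∀ i < k, B (r k) (p i) = 0
  direction_direction : ∀ i < k, B (p k) (T (p i)) = 0

namespace IsConjGradIteration_s15

variable {B : LinearMap.BilinForm K V} {T : Module.End K V} {r p : ℕ → V} {α β : ℕ → K}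

theorem form_residual_direction_self_s15 (h : IsConjGradIteration_s15 B T r p α β) {k : ℕ}
    (hk : ∀ i < k, B (r k) (p i) = 0) : B (r k) (p k) = B (r k) (r k) := by
  cases k with
  | zero => rw [h.direction_zero]
  | succ k =>
    rw [h.direction_succ, map_add, map_smul, hk k k.lt_succ_self, smul_zero, add_zero]

theorem form_residual_residual_eq_zero (h : IsConjGradIteration_s15 B T r p α β) {k : ℕ}
    (hk : ∀ i < k, B (r k) (p i) = 0) : ∀ i < k, B (r k) (r i) = 0 := by
  rintro (_ | i) hi
  · rw [← h.direction_zero, hk 0 hi]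
  · rw [eq_sub_of_add_eq (h.direction_succ i).symm, map_sub, map_smul, hk _ hi,
      hk i (Nat.lt_of_succ_lt hi), smul_zero, sub_zero]

theorem step_mul_form_map_direction (h : IsConjGradIteration_s15 B T r p α β) (u : V) (i : ℕ) :
    α i * B u (T (p i)) = B u (r i) - B u (r (i + 1)) := by
  rw [h.residual_succ, map_sub, map_smul, smul_eq_mul, sub_sub_cancel]

variable [LinearOrder K]

theorem direction_ne_zero (h : IsConjGradIteration_s15 B T r p α β) (hB : IsSymmPosDef B T) {k : ℕ}
    (hk : ∀ i < k, B (r k) (p i) = 0) (hr : r k ≠ 0) : p k ≠ 0 := fun hp =>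
  (hB.pos _ hr).ne' (by rw [← h.form_residual_direction_self_s15 hk, hp, map_zero])

theorem step_mul_form_direction (h : IsConjGradIteration_s15 B T r p α β) (hB : IsSymmPosDef B T)
    {k : ℕ} (hk : ∀ i < k, B (r k) (p i) = 0) (hr : r k ≠ 0) :
    α k * B (p k) (T (p k)) = B (r k) (r k) := by
  rw [h.step_eq, div_mul_cancel₀ _ (hB.map_pos _ (h.direction_ne_zero hB hk hr)).ne']

theorem step_ne_zero (h : IsConjGradIteration_s15 B T r p α β) (hB : IsSymmPosDef B T) {k : ℕ}
    (hk : ∀ i < k, B (r k) (p i) = 0) (hr : r k ≠ 0) : α k ≠ 0 := fun hα =>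
  (hB.pos _ hr).ne' (by rw [← h.step_mul_form_direction hB hk hr, hα, zero_mul])

theorem residual_succ_orthogonal (h : IsConjGradIteration_s15 B T r p α β) (hB : IsSymmPosDef B T)
    {k : ℕ} (hk : ConjugateAt B T r p k) (hr : r k ≠ 0) :
    ∀ i < k + 1, B (r (k + 1)) (p i) = 0 := by
  intro i hi
  have expand : B (r (k + 1)) (p i) = B (r k) (p i) - α k * B (p k) (T (p i)) := by
    rw [h.residual_succ, map_sub, map_smul, LinearMap.sub_apply, LinearMap.smul_apply,
      smul_eq_mul, hB.isSelfAdjoint]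
  rcases Nat.lt_succ_iff_lt_or_eq.1 hi with hik | rfl
  · rw [expand, hk.residual_direction i hik, hk.direction_direction i hik, mul_zero, sub_zero]
  · rw [expand, h.form_residual_direction_self_s15 hk.residual_direction,
      h.step_mul_form_direction hB hk.residual_direction hr, sub_self]

theorem direction_succ_conjugate (h : IsConjGradIteration_s15 B T r p α β) (hB : IsSymmPosDef B T)
    {k : ℕ} (hk : ∀ i ≤ k, ConjugateAt B T r p i) (hr : ∀ i ≤ k, r i ≠ 0) :
    ∀ i < k + 1, B (p (k + 1)) (T (p i)) = 0 := by
  intro i hi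
  have hik : i ≤ k := Nat.le_of_lt_succ hi
  have residual_orthogonal : ∀ j < k + 1, B (r (k + 1)) (r j) = 0 :=
    h.form_residual_residual_eq_zero
      (h.residual_succ_orthogonal hB (hk k le_rfl) (hr k le_rfl))
  have step_residual : α i * B (r (k + 1)) (T (p i)) = -B (r (k + 1)) (r (i + 1)) := by
    rw [h.step_mul_form_map_direction, residual_orthogonal i hi, zero_sub]
  have expand : B (p (k + 1)) (T (p i)) = B (r (k + 1)) (T (p i)) + β k * B (p k) (T (p i)) := by
    rw [h.direction_succ, map_add, map_smul, LinearMap.add_apply, LinearMap.smul_apply,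
      smul_eq_mul]
  refine (mul_eq_zero.1 ?_).resolve_left
    (h.step_ne_zero hB (hk i hik).residual_direction (hr i hik))
  rcases hik.lt_or_eq with hik | rfl
  · rw [expand, (hk k le_rfl).direction_direction i hik, mul_zero, add_zero, step_residual,
      residual_orthogonal _ (Nat.succ_lt_succ hik), neg_zero]
  · have step_direction := h.step_mul_form_direction hB (hk i le_rfl).residual_direction
      (hr i le_rfl)
    have coeff_mul : β i * B (r i) (r i) = B (r (i + 1)) (r (i + 1)) := by
      rw [h.coeff_eq, div_mul_cancel₀ _ (hB.pos _ (hr i le_rfl)).ne']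
    rw [expand]
    linear_combination step_residual + β i * step_direction + coeff_mul

theorem conjugateAt (h : IsConjGradIteration_s15 B T r p α β) (hB : IsSymmPosDef B T) {k : ℕ}
    (hr : ∀ i < k, r i ≠ 0) : ConjugateAt B T r p k := by
  induction k using Nat.strong_induction_on with
  | h k ih =>
    cases k with
    | zero => exact ⟨fun _ hi => absurd hi (Nat.not_lt_zero _),
        fun _ hi => absurd hi (Nat.not_lt_zero _)⟩
    | succ k =>
      have earlier : ∀ i ≤ k, ConjugateAt B T r p i := fun i hik =>
        ih i (Nat.lt_succ_of_le hik) fun j hj => hr j (by lia)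
      have hr' : ∀ i ≤ k, r i ≠ 0 := fun i hik => hr i (Nat.lt_succ_of_le hik)
      exact ⟨h.residual_succ_orthogonal hB (earlier k le_rfl) (hr' k le_rfl),
        h.direction_succ_conjugate hB earlier hr'⟩

theorem form_direction_map_direction_nonneg (h : IsConjGradIteration_s15 B T r p α β)
    (hB : IsSymmPosDef B T) {ℓ : ℕ} (hr : ∀ k < ℓ, r k ≠ 0) {i j : ℕ} (hi : i ≤ ℓ) (hj : j ≤ ℓ) :
    0 ≤ B (p i) (T (p j)) := by
  have conj : ∀ k ≤ ℓ, ConjugateAt B T r p k := fun k hk =>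
    h.conjugateAt hB fun i hi => hr i (hi.trans_le hk)
  rcases lt_trichotomy i j with hij | rfl | hji
  · rw [← hB.isSelfAdjoint, hB.isSymm.eq, (conj j hj).direction_direction i hij]
  · exact hB.map_nonneg _
  · rw [(conj i hi).direction_direction j hji]

variable [IsStrictOrderedRing K]

theorem step_nonneg (h : IsConjGradIteration_s15 B T r p α β) (hB : IsSymmPosDef B T) (k : ℕ) :
    0 ≤ α k := by
  rw [h.step_eq]
  exact div_nonneg (hB.nonneg _) (hB.map_nonneg _)

theorem coeff_nonneg (h : IsConjGradIteration_s15 B T r p α β) (hB : IsSymmPosDef B T) (k : ℕ) :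
    0 ≤ β k := by
  rw [h.coeff_eq]
  exact div_nonneg (hB.nonneg _) (hB.nonneg _)

theorem dual_direction_nonneg (h : IsConjGradIteration_s15 B T r p α β) (hB : IsSymmPosDef B T)
    (f : Module.Dual K V) {j : ℕ} (hf : ∀ k ≤ j, 0 ≤ f (r k)) : 0 ≤ f (p j) := by
  induction j with
  | zero => simpa only [h.direction_zero] using hf 0 le_rfl
  | succ j ih =>
    rw [h.direction_succ, map_add, map_smul]
    exact add_nonneg (hf _ le_rfl)
      (smul_nonneg (h.coeff_nonneg hB j) (ih fun k hk => hf k (hk.trans j.le_succ)))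

theorem dual_residual_nonneg (h : IsConjGradIteration_s15 B T r p α β) (hB : IsSymmPosDef B T)
    (f : Module.Dual K V) {ℓ : ℕ} (hℓ : r ℓ = 0) (hf : ∀ k < ℓ, 0 ≤ f (T (p k))) {j : ℕ}
    (hj : j ≤ ℓ) : 0 ≤ f (r j) := by
  induction hj using Nat.decreasingInduction with
  | self => rw [hℓ, map_zero]
  | of_succ j hj ih =>
    rw [eq_add_of_sub_eq (h.residual_succ j).symm, map_add, map_smul]
    exact add_nonneg ih (smul_nonneg (h.step_nonneg hB j) (hf j hj))

theorem dual_direction_nonneg_of_pow (h : IsConjGradIteration_s15 B T r p α β)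
    (hB : IsSymmPosDef B T) (f : Module.Dual K V) {ℓ : ℕ} (hℓ : r ℓ = 0) (m : ℕ)
    (hf : ∀ j ≤ ℓ, 0 ≤ f ((T ^ m) (p j))) : ∀ j ≤ ℓ, 0 ≤ f (p j) := by
  induction m with
  | zero => exact hf
  | succ m ih =>
    refine ih fun j hj => h.dual_direction_nonneg hB (f ∘ₗ T ^ m) fun k hk => ?_
    refine h.dual_residual_nonneg hB (f ∘ₗ T ^ m) hℓ (fun i hi => ?_) (hk.trans hj)
    simpa only [pow_succ, Module.End.mul_apply, LinearMap.comp_apply] using hf i hi.le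

end IsConjGradIteration_s15

theorem car_pp_nonneg_general [LinearOrder K] [IsStrictOrderedRing K]
    {D : LinearMap.BilinForm K V} {T : Module.End K V} (hD : IsSymmPosDef D T) (m : ℕ)
    {r p : ℕ → V} {α β : ℕ → K} (h : IsConjGradIteration_s15 (D.compRight (T ^ m)) T r p α β)
    {ℓ : ℕ} (hne : ∀ k < ℓ, r k ≠ 0) (hfin : r ℓ = 0) :
    ∀ i ≤ ℓ, ∀ j ≤ ℓ, 0 ≤ D (p i) (p j) := by
  intro i hi
  refine h.dual_direction_nonneg_of_pow (hD.compRight_pow m) (D (p i)) hfin (m + 1) fun j hj => ?_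
  rw [pow_succ, Module.End.mul_apply, ← D.compRight_apply]
  exact h.form_direction_map_direction_nonneg (hD.compRight_pow m) hne hi hj

end ConjGrad

section Matrix

variable {ι : Type*} [Fintype ι]

theorem mulVec_dotProduct_of_isSymm {R : Type*} [CommSemiring R] {M : Matrix ι ι R}
    (hM : M.IsSymm) (u v : ι → R) : M *ᵥ u ⬝ᵥ v = u ⬝ᵥ M *ᵥ v := by
  rw [dotProduct_mulVec, ← mulVec_transpose, hM.eq]

variable [DecidableEq ι] {A : Matrix ι ι ℝ}

theorem isSymmPosDef_dotProductBilin_toLin' (hA : A.PosDef) :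
    IsSymmPosDef (dotProductBilin ℝ ℝ) (toLin' A) where
  isSymm := ⟨dotProduct_comm⟩
  isSelfAdjoint := mulVec_dotProduct_of_isSymm hA.isHermitian
  pos _ hv := dotProduct_self_star_pos_iff.2 hv
  map_pos _ hv := hA.dotProduct_mulVec_pos hv

theorem isConjGradIteration_of_car (hA : A.IsSymm) {r p : ℕ → ι → ℝ} {ρ α β : ℕ → ℝ}
    (h0 : p 0 = r 0)
    (hρ : ∀ k, ρ k = r k ⬝ᵥ (A ^ 3) *ᵥ r k)
    (hα : ∀ k, α k = ρ k / ((A ^ 2) *ᵥ p k ⬝ᵥ (A ^ 2) *ᵥ p k))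
    (hr : ∀ k, r (k + 1) = r k - α k • A *ᵥ p k)
    (hβ : ∀ k, β k = ρ (k + 1) / ρ k)
    (hp : ∀ k, p (k + 1) = r (k + 1) + β k • p k) :
    IsConjGradIteration_s15 (LinearMap.BilinForm.compRight (dotProductBilin ℝ ℝ) (toLin' A ^ 3))
      (toLin' A) r p α β := by
  rw [← toLin'_pow]
  have sq_norm (v : ι → ℝ) : (A ^ 2) *ᵥ v ⬝ᵥ (A ^ 2) *ᵥ v = v ⬝ᵥ (A ^ 3) *ᵥ (A *ᵥ v) := by
    rw [mulVec_dotProduct_of_isSymm (hA.pow 2), mulVec_mulVec, mulVec_mulVec, ← pow_add,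
      ← pow_succ]
  exact
    { direction_zero := h0
      step_eq := fun k => by rw [hα, hρ, sq_norm]; rfl
      residual_succ := hr
      coeff_eq := fun k => by rw [hβ, hρ, hρ]; rfl
      direction_succ := hp }

end Matrix

/-- Paper: Theorem 6.3(i).  cAr iteration for SPD `A` (with `ρ_k = r_kᵀA³r_k`,
`α_k = ρ_k/‖A²p_k‖²`, `β_k = ρ_{k+1}/ρ_k`), terminating at step `ℓ ≤ n`
(`r_k ≠ 0` for `k < ℓ` and `r_ℓ = 0`):  the directions have nonnegative mutual inner products: `p_iᵀ p_j ≥ 0`. -/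
theorem car_pp_nonneg (n ℓ : ℕ) (hℓn : ℓ ≤ n)
    (A : Matrix (Fin n) (Fin n) ℝ) (hA : A.PosDef) (b : Fin n → ℝ)
    (x r p : ℕ → (Fin n → ℝ)) (ρ α β : ℕ → ℝ)
    (hx0 : x 0 = 0) (hr0 : r 0 = b) (hp0 : p 0 = b)
    (hρ : ∀ k, ρ k = r k ⬝ᵥ (A ^ 3).mulVec (r k))
    (hα : ∀ k, α k = ρ k / ((A ^ 2).mulVec (p k) ⬝ᵥ (A ^ 2).mulVec (p k)))
    (hx : ∀ k, x (k + 1) = x k + α k • p k)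
    (hr : ∀ k, r (k + 1) = r k - α k • A.mulVec (p k))
    (hβ : ∀ k, β k = ρ (k + 1) / ρ k)
    (hp : ∀ k, p (k + 1) = r (k + 1) + β k • p k)
    (hne : ∀ k < ℓ, r k ≠ 0) (hfin : r ℓ = 0) :
    ∀ i ≤ ℓ, ∀ j ≤ ℓ, 0 ≤ p i ⬝ᵥ p j :=
  car_pp_nonneg_general (isSymmPosDef_dotProductBilin_toLin' hA) 3
    (isConjGradIteration_of_car hA.isHermitian (hp0.trans hr0.symm) hρ hα hr hβ hp) hne hfin
end
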